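/- arXiv:1912.08951 — 2 statements merged into one kernel-verified Lean document; each statement's English description precedes it below -/
import Mathlib

section
/- There is a constant C > 0 such that for all α, β, ε ∈ (0,1] and all b, c ∈ ℕ there exist m ≤ C·(c/(α⁴ε))·log(1/(αβ)) and n ≤ C·(b³/(α⁴ε²))·log(b/(αβε)) and a non-interactive ε-differentially private protocol in the (m,n)-hybrid model over the labeled-example domain {0,1}^c × {0,1}^b × {0,1} — i.e., an ε-differentially private curator mechanism on m labeled examples, n ε-differentially private local randomizers each acting on one labeled example, and a referee map — whose output hypothesis (α,β)-PAC learns ParityThresh_{b,c}: for every f^{k,t} ∈ ParityThresh_{b,c} and every distribution D on {0,1}^c × {0,1}^b, when all m+n examples are drawn i.i.d. from D and labeled by f^{k,t}, with probability at least 1−β the protocol outputs h : {0,1}^c × {0,1}^b → {0,1} with Pr_{(x,y)∼D}[h(x,y) ≠ f^{k,t}(x,y)] ≤ α. -/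
open scoped ENNReal

/-- Two databases of size `m` are neighboring if they differ in at most one entry. -/
def Neighbor {X : Type*} {m : ℕ} (x x' : Fin m → X) : Prop :=
  ∃ i : Fin m, ∀ j : Fin m, j ≠ i → x j = x' j

/-- The probability that a sample from `P` lands in the set `T`. -/
noncomputable def prOf {Y : Type*} (P : PMF Y) (T : Set Y) : ℝ≥0∞ :=
  P.toOuterMeasure T

/-- `ε`-differential privacy for a mechanism operating on databases of size `m`. -/
def DPAlg {X Y : Type*} {m : ℕ} (ε : ℝ) (A : (Fin m → X) → PMF Y) : Prop :=
  ∀ x x' : Fin m → X, Neighbor x x' → ∀ T : Set Y,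
    prOf (A x) T ≤ ENNReal.ofReal (Real.exp ε) * prOf (A x') T

/-- `ε`-differential privacy for a local randomizer. -/
def DPRand {X Y : Type*} (ε : ℝ) (R : X → PMF Y) : Prop :=
  ∀ x x' : X, ∀ T : Set Y,
    prOf (R x) T ≤ ENNReal.ofReal (Real.exp ε) * prOf (R x') T

/-- `m` i.i.d. samples from the distribution `D`. -/
noncomputable def iid {Z : Type*} (D : PMF Z) : (m : ℕ) → PMF (Fin m → Z)
  | 0 => PMF.pure (fun i => i.elim0)
  | m + 1 => (iid D m).bind fun f => D.bind fun z => PMF.pure (Fin.cons z f)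

/-- Independent product of finitely many PMFs. -/
noncomputable def pmfPi : (n : ℕ) → {T : Fin n → Type} → (∀ i, PMF (T i)) → PMF (∀ i, T i)
  | 0, _, _ => PMF.pure (fun i => i.elim0)
  | n + 1, T, P =>
      (P 0).bind fun t0 =>
        (@pmfPi n (fun i => T i.succ) (fun i => P i.succ)).bind fun ts =>
          PMF.pure (Fin.cons t0 ts)

/-- XOR of a finite family of bits. -/
def xorFold {I : Type*} [Fintype I] (f : I → Bool) : Bool :=
  decide ((Finset.univ.filter (fun i => f i = true)).card % 2 = 1)

/-- The parity function `Par_k(x) = ⊕ k_i x_i`. -/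
def Par {c : ℕ} (k x : Fin c → Bool) : Bool := xorFold (fun i => k i && x i)

/-- Interpret a bit string as an integer in `{0, …, 2^b − 1}`. -/
def bitsToNat {b : ℕ} (y : Fin b → Bool) : ℕ :=
  ∑ i : Fin b, if y i then 2 ^ (i : ℕ) else 0

/-- The threshold function `Thr_t(y) = 1` iff `y ≥ t`. -/
def Thr {b : ℕ} (t y : Fin b → Bool) : Bool := decide (bitsToNat t ≤ bitsToNat y)

/-- Generalization error of hypothesis `h` w.r.t. target `c` under distribution `D`. -/
noncomputable def errD {Z L : Type*} (D : PMF Z) (c h : Z → L) : ℝ≥0∞ :=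
  prOf D {z | h z ≠ c z}

/-- `(α, β)`-PAC learning for the concept class `C` with sample complexity `m`:
for every concept in `C` and distribution `D` on the domain, when the `m` examples are drawn
i.i.d. from `D` and labeled by the concept, with probability at least `1 − β` the output
hypothesis has generalization error at most `α`. -/
def PACLearner {Z L : Type*} {m : ℕ} (α β : ℝ) (C : Set (Z → L))
    (A : (Fin m → Z × L) → PMF (Z → L)) : Prop :=
  ∀ c ∈ C, ∀ D : PMF Z,
    ENNReal.ofReal (1 - β) ≤
      prOf ((iid D m).bind fun s => A (fun i => (s i, c (s i))))
        {h | errD D c h ≤ ENNReal.ofReal α}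

/-! ### Basic facts on `prOf` -/

lemma prOf_mono {Y : Type*} (P : PMF Y) {A B : Set Y} (h : A ⊆ B) : prOf P A ≤ prOf P B :=
  P.toOuterMeasure.mono h

lemma prOf_univ {Y : Type*} (P : PMF Y) : prOf P Set.univ = 1 := by
  rw [prOf, PMF.toOuterMeasure_apply, Set.indicator_univ, PMF.tsum_coe]

lemma prOf_le_one {Y : Type*} (P : PMF Y) (A : Set Y) : prOf P A ≤ 1 :=
  prOf_univ P ▸ prOf_mono P (Set.subset_univ A)

lemma prOf_union_le {Y : Type*} (P : PMF Y) (A B : Set Y) :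
    prOf P (A ∪ B) ≤ prOf P A + prOf P B :=
  MeasureTheory.measure_union_le A B

lemma prOf_biUnion_le {Y I : Type*} (P : PMF Y) (s : Finset I) (A : I → Set Y) (δ : ℝ≥0∞)
    (h : ∀ i ∈ s, prOf P (A i) ≤ δ) : prOf P (⋃ i ∈ s, A i) ≤ s.card * δ := by
  refine (MeasureTheory.measure_biUnion_finset_le s A).trans ?_
  rw [← nsmul_eq_mul]
  exact Finset.sum_le_card_nsmul s _ δ h

lemma prOf_bind {X Y : Type*} (P : PMF X) (f : X → PMF Y) (T : Set Y) :
    prOf (P.bind f) T = ∑' x, P x * prOf (f x) T :=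
  PMF.toOuterMeasure_bind_apply P f T

lemma prOf_bind_le {X Y : Type*} (P : PMF X) (f : X → PMF Y) (T : Set Y) (Bad : Set X)
    (δ₁ δ₂ : ℝ≥0∞) (h₁ : prOf P Bad ≤ δ₁) (h₂ : ∀ x ∉ Bad, prOf (f x) T ≤ δ₂) :
    prOf (P.bind f) T ≤ δ₁ + δ₂ := by
  have key : ∀ x, P x * prOf (f x) T ≤ Bad.indicator P x + P x * δ₂ := by
    intro x
    by_cases hx : x ∈ Bad
    · rw [Set.indicator_of_mem hx]
      exact (mul_le_of_le_one_right' (prOf_le_one _ _)).trans le_self_add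
    · rw [Set.indicator_of_notMem hx, zero_add]
      gcongr
      exact h₂ x hx
  rw [prOf_bind]
  refine (ENNReal.tsum_le_tsum key).trans ?_
  rw [ENNReal.tsum_add, ENNReal.tsum_mul_right, PMF.tsum_coe, one_mul]
  rw [prOf, PMF.toOuterMeasure_apply] at h₁
  gcongr

lemma le_prOf_of_compl_le {Y : Type*} (P : PMF Y) (A : Set Y) {β : ℝ} (hβ : 0 ≤ β)
    (h : prOf P Aᶜ ≤ ENNReal.ofReal β) : ENNReal.ofReal (1 - β) ≤ prOf P A := by
  have h1 : (1 : ℝ≥0∞) ≤ prOf P A + ENNReal.ofReal β := by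
    calc (1 : ℝ≥0∞) = prOf P (A ∪ Aᶜ) := by rw [Set.union_compl_self, prOf_univ]
      _ ≤ prOf P A + prOf P Aᶜ := prOf_union_le P _ _
      _ ≤ _ := by gcongr
  rw [ENNReal.ofReal_sub 1 hβ, ENNReal.ofReal_one]
  exact tsub_le_iff_right.mpr h1

lemma prOf_le_mul_of_forall_le {Y : Type*} (P Q : PMF Y) (K : ℝ≥0∞) (h : ∀ y, P y ≤ K * Q y)
    (T : Set Y) : prOf P T ≤ K * prOf Q T := by
  rw [prOf, prOf, PMF.toOuterMeasure_apply, PMF.toOuterMeasure_apply, ← ENNReal.tsum_mul_left]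
  refine ENNReal.tsum_le_tsum fun y => ?_
  by_cases hy : y ∈ T <;> simp [hy, h y]

/-! ### Means of real functions over finite types -/

/-- The mean of `φ` under the distribution `P` on a finite type. -/
noncomputable def pmfMean {W : Type*} [Fintype W] (P : PMF W) (φ : W → ℝ) : ℝ :=
  ∑ w, (P w).toReal * φ w

section Mean

variable {W : Type*} [Fintype W] (P : PMF W)

lemma sum_toReal_eq_one : ∑ w, (P w).toReal = 1 := by
  rw [← ENNReal.toReal_sum fun w _ => P.apply_ne_top w, ← tsum_fintype (L := .unconditional _),
    PMF.tsum_coe, ENNReal.toReal_one]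

lemma pmfMean_const (r : ℝ) : pmfMean P (fun _ => r) = r := by
  rw [pmfMean, ← Finset.sum_mul, sum_toReal_eq_one, one_mul]

lemma pmfMean_add (φ ψ : W → ℝ) :
    pmfMean P (fun w => φ w + ψ w) = pmfMean P φ + pmfMean P ψ := by
  simp only [pmfMean, mul_add, Finset.sum_add_distrib]

lemma pmfMean_sub (φ ψ : W → ℝ) :
    pmfMean P (fun w => φ w - ψ w) = pmfMean P φ - pmfMean P ψ := by
  simp only [pmfMean, mul_sub, Finset.sum_sub_distrib]

lemma pmfMean_const_mul (r : ℝ) (φ : W → ℝ) :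
    pmfMean P (fun w => r * φ w) = r * pmfMean P φ := by
  simp only [pmfMean, Finset.mul_sum]
  exact Finset.sum_congr rfl fun w _ => by ring

lemma pmfMean_mono {φ ψ : W → ℝ} (h : ∀ w, φ w ≤ ψ w) : pmfMean P φ ≤ pmfMean P ψ :=
  Finset.sum_le_sum fun w _ => mul_le_mul_of_nonneg_left (h w) ENNReal.toReal_nonneg

lemma pmfMean_bind {Z : Type*} [Fintype Z] (D : PMF Z) (f : Z → PMF W) (φ : W → ℝ) :
    pmfMean (D.bind f) φ = pmfMean D (fun z => pmfMean (f z) φ) := by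
  have h : ∀ w, ((D.bind f) w).toReal = ∑ z, (D z).toReal * (f z w).toReal := by
    intro w
    rw [PMF.bind_apply, tsum_fintype, ENNReal.toReal_sum]
    · simp only [ENNReal.toReal_mul]
    · intro z _
      exact ENNReal.mul_ne_top (D.apply_ne_top z) ((f z).apply_ne_top w)
  simp only [pmfMean, h, Finset.sum_mul, Finset.mul_sum]
  rw [Finset.sum_comm]
  simp only [mul_assoc]

lemma tsum_mul_ofReal (φ : W → ℝ) (h : ∀ w, 0 ≤ φ w) :
    ∑' w, P w * ENNReal.ofReal (φ w) = ENNReal.ofReal (pmfMean P φ) := by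
  rw [tsum_fintype, pmfMean, ENNReal.ofReal_sum_of_nonneg]
  · refine Finset.sum_congr rfl fun w _ => ?_
    rw [ENNReal.ofReal_mul ENNReal.toReal_nonneg, ENNReal.ofReal_toReal (P.apply_ne_top w)]
  · exact fun w _ => mul_nonneg ENNReal.toReal_nonneg (h w)

lemma prOf_eq_ofReal_pmfMean (A : Set W) [DecidablePred (· ∈ A)] :
    prOf P A = ENNReal.ofReal (pmfMean P (fun w => if w ∈ A then 1 else 0)) := by
  rw [← tsum_mul_ofReal P _ (fun w => by split_ifs <;> norm_num), prOf,
    PMF.toOuterMeasure_apply]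
  refine tsum_congr fun w => ?_
  by_cases hw : w ∈ A <;> simp [hw]

end Mean

/-! ### Independent samples -/

lemma tsum_bind_mul {X Y : Type*} (P : PMF X) (f : X → PMF Y) (G : Y → ℝ≥0∞) :
    ∑' y, (P.bind f) y * G y = ∑' x, P x * ∑' y, f x y * G y := by
  simp only [PMF.bind_apply, ← ENNReal.tsum_mul_right, ← ENNReal.tsum_mul_left, mul_assoc]
  exact ENNReal.tsum_comm

lemma tsum_pure_mul {Y : Type*} (y₀ : Y) (G : Y → ℝ≥0∞) :
    ∑' y, (PMF.pure y₀) y * G y = G y₀ := by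
  rw [tsum_eq_single y₀]
  · simp
  · intro y hy
    simp [PMF.pure_apply, hy]

lemma tsum_iid_mul_prod {W : Type*} (P : PMF W) (g : W → ℝ≥0∞) (n : ℕ) :
    ∑' s, iid P n s * ∏ i, g (s i) = (∑' w, P w * g w) ^ n := by
  induction n with
  | zero => rw [iid, tsum_pure_mul]; simp
  | succ n ih =>
    simp only [iid, tsum_bind_mul, tsum_pure_mul, Fin.prod_univ_succ, Fin.cons_zero, Fin.cons_succ]
    have h : ∀ r : ℝ≥0∞, ∑' w, P w * (g w * r) = (∑' w, P w * g w) * r := fun r => by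
      simp only [← mul_assoc, ENNReal.tsum_mul_right]
    simp only [h, mul_left_comm _ (∑' w, P w * g w), ENNReal.tsum_mul_left]
    rw [ih, pow_succ']

lemma iid_bind_pmfPi {Z W : Type} (D : PMF Z) (R : Z → PMF W) (n : ℕ) :
    ((iid D n).bind fun ys => pmfPi n fun i => R (ys i)) = iid (D.bind R) n := by
  induction n with
  | zero => simp [iid, pmfPi]
  | succ n ih =>
    rw [iid, iid, ← ih]
    simp only [PMF.bind_bind, PMF.pure_bind, pmfPi, Fin.cons_zero, Fin.cons_succ]
    refine congrArg _ (funext fun f => ?_)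
    rw [PMF.bind_comm]
    exact congrArg _ (funext fun z => PMF.bind_comm _ _ _)

/-! ### Concentration of sums of independent samples -/

section Concentration

variable {W : Type*} [Fintype W] (P : PMF W)

lemma prOf_iid_sum_ge_le {ψ : W → ℝ} {a B : ℝ} (ha : 0 < a) (haB : a ≤ 2 * B)
    (hmean : pmfMean P ψ = 0) (hB : ∀ w, |ψ w| ≤ B) (n : ℕ) :
    prOf (iid P n) {s | n * a ≤ ∑ i, ψ (s i)} ≤
      ENNReal.ofReal (Real.exp (-(n * (a ^ 2 / (4 * B ^ 2))))) := by
  have hBpos : 0 < B := by linarith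
  set l : ℝ := a / (2 * B ^ 2) with hl
  have hlpos : 0 < l := by positivity
  have hlB : l * B ≤ 1 := by
    have : l * B = a / (2 * B) := by rw [hl]; field_simp
    rw [this, div_le_one (by positivity)]
    exact haB
  have hmgf : pmfMean P (fun w => Real.exp (l * (ψ w - a))) ≤
      Real.exp (-(a ^ 2 / (4 * B ^ 2))) := by
    have h1 : ∀ w, Real.exp (l * (ψ w - a)) ≤
        Real.exp (-(l * a)) * ((1 + l ^ 2 * B ^ 2) + l * ψ w) := by
      intro w
      have hx : |l * ψ w| ≤ 1 := by
        rw [abs_mul, abs_of_pos hlpos]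
        exact (mul_le_mul_of_nonneg_left (hB w) hlpos.le).trans hlB
      have h2 := (abs_le.mp (Real.abs_exp_sub_one_sub_id_le hx)).2
      have h3 : (l * ψ w) ^ 2 ≤ l ^ 2 * B ^ 2 := by
        rw [mul_pow]
        have := sq_le_sq.mpr ((hB w).trans (le_abs_self B))
        gcongr
      rw [show l * (ψ w - a) = -(l * a) + l * ψ w by ring, Real.exp_add]
      gcongr
      linarith
    refine (pmfMean_mono P h1).trans ?_
    rw [pmfMean_const_mul, pmfMean_add, pmfMean_const, pmfMean_const_mul, hmean, mul_zero, add_zero]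
    have h4 := Real.add_one_le_exp (l ^ 2 * B ^ 2)
    calc Real.exp (-(l * a)) * (1 + l ^ 2 * B ^ 2)
        ≤ Real.exp (-(l * a)) * Real.exp (l ^ 2 * B ^ 2) := by
          gcongr
          linarith
      _ = Real.exp (-(a ^ 2 / (4 * B ^ 2))) := by
          rw [← Real.exp_add, hl]
          congr 1
          field_simp
          ring
  have hmarkov : prOf (iid P n) {s | n * a ≤ ∑ i, ψ (s i)} ≤
      ∑' s, iid P n s * ∏ i, ENNReal.ofReal (Real.exp (l * (ψ (s i) - a))) := by
    rw [prOf, PMF.toOuterMeasure_apply]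
    refine ENNReal.tsum_le_tsum fun s => ?_
    by_cases hs : s ∈ {s : Fin n → W | n * a ≤ ∑ i, ψ (s i)}
    · rw [Set.indicator_of_mem hs,
        ← ENNReal.ofReal_prod_of_nonneg (fun i _ => (Real.exp_pos _).le), ← Real.exp_sum,
        ← Finset.mul_sum, Finset.sum_sub_distrib]
      refine le_mul_of_one_le_right' ?_
      rw [ENNReal.one_le_ofReal, Real.one_le_exp_iff]
      refine mul_nonneg hlpos.le ?_
      simpa using hs
    · rw [Set.indicator_of_notMem hs]
      exact bot_le
  refine hmarkov.trans ?_
  rw [tsum_iid_mul_prod P (fun w => ENNReal.ofReal (Real.exp (l * (ψ w - a)))),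
    tsum_mul_ofReal P _ (fun w => (Real.exp_pos _).le),
    show -((n : ℝ) * (a ^ 2 / (4 * B ^ 2))) = n * -(a ^ 2 / (4 * B ^ 2)) by ring,
    Real.exp_nat_mul, ENNReal.ofReal_pow (Real.exp_pos _).le]
  gcongr

/-- Two-sided concentration of an empirical sum around its mean. -/
lemma prOf_iid_abs_sum_sub_le {φ : W → ℝ} {a B : ℝ} (ha : 0 < a) (haB : a ≤ 2 * B)
    (hB : ∀ w, |φ w - pmfMean P φ| ≤ B) (n : ℕ) :
    prOf (iid P n) {s | n * a ≤ |∑ i, φ (s i) - n * pmfMean P φ|} ≤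
      ENNReal.ofReal (2 * Real.exp (-(n * (a ^ 2 / (4 * B ^ 2))))) := by
  have h0 : pmfMean P (fun w => φ w - pmfMean P φ) = 0 := by
    rw [pmfMean_sub, pmfMean_const, sub_self]
  have h0' : pmfMean P (fun w => -1 * (φ w - pmfMean P φ)) = 0 := by
    rw [pmfMean_const_mul, h0, mul_zero]
  have hpos := prOf_iid_sum_ge_le P ha haB h0 hB n
  have hneg := prOf_iid_sum_ge_le P ha haB h0'
    (fun w => by rw [neg_one_mul, abs_neg]; exact hB w) n
  have hsub : {s : Fin n → W | n * a ≤ |∑ i, φ (s i) - n * pmfMean P φ|} ⊆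
      {s | n * a ≤ ∑ i, (φ (s i) - pmfMean P φ)} ∪
      {s | n * a ≤ ∑ i, -1 * (φ (s i) - pmfMean P φ)} := by
    intro s hs
    simp only [Set.mem_union, Set.mem_ofPred_eq, neg_one_mul, Finset.sum_neg_distrib,
      Finset.sum_sub_distrib, Finset.sum_const, Finset.card_univ, Fintype.card_fin,
      nsmul_eq_mul] at hs ⊢
    exact le_abs.mp hs
  refine (prOf_mono _ hsub).trans ((prOf_union_le _ _ _).trans ((add_le_add hpos hneg).trans ?_))
  rw [← ENNReal.ofReal_add (Real.exp_pos _).le (Real.exp_pos _).le, two_mul]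

end Concentration

/-! ### The exponential mechanism -/

/-- The distribution on a finite type with real weights `w`. -/
noncomputable def pmfOfReal {O : Type*} [Fintype O] (w : O → ℝ) (h₀ : ∀ o, 0 ≤ w o)
    (h₁ : ∑ o, w o = 1) : PMF O :=
  PMF.ofFintype (fun o => ENNReal.ofReal (w o)) (by
    rw [← ENNReal.ofReal_sum_of_nonneg fun o _ => h₀ o, h₁, ENNReal.ofReal_one])

lemma pmfOfReal_le_mul {O : Type*} [Fintype O] {w w' : O → ℝ} (h₀ : ∀ o, 0 ≤ w o)
    (h₁ : ∑ o, w o = 1) (h₀' : ∀ o, 0 ≤ w' o) (h₁' : ∑ o, w' o = 1) {K : ℝ} (hK : 0 ≤ K)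
    (h : ∀ o, w o ≤ K * w' o) (T : Set O) :
    prOf (pmfOfReal w h₀ h₁) T ≤ ENNReal.ofReal K * prOf (pmfOfReal w' h₀' h₁') T := by
  refine prOf_le_mul_of_forall_le _ _ _ (fun o => ?_) T
  simp only [pmfOfReal, PMF.ofFintype_apply]
  rw [← ENNReal.ofReal_mul hK]
  exact ENNReal.ofReal_le_ofReal (h o)

lemma pmfMean_pmfOfReal {O : Type*} [Fintype O] (w : O → ℝ) (h₀ : ∀ o, 0 ≤ w o)
    (h₁ : ∑ o, w o = 1) (φ : O → ℝ) : pmfMean (pmfOfReal w h₀ h₁) φ = ∑ o, w o * φ o := by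
  simp only [pmfMean, pmfOfReal, PMF.ofFintype_apply, ENNReal.toReal_ofReal (h₀ _)]

section ExpMech

variable {O : Type*} [Fintype O] [Nonempty O]

lemma sum_exp_pos (u : O → ℝ) : 0 < ∑ o, Real.exp (u o) :=
  Finset.sum_pos (fun _ _ => Real.exp_pos _) Finset.univ_nonempty

/-- The distribution with weights proportional to `exp (-η * cost o)`. -/
noncomputable def gibbs (η : ℝ) (cost : O → ℝ) : PMF O :=
  pmfOfReal (fun o => Real.exp (-η * cost o) / ∑ o', Real.exp (-η * cost o'))
    (fun _ => div_nonneg (Real.exp_pos _).le (sum_exp_pos _).le)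
    (by rw [← Finset.sum_div]; exact div_self (sum_exp_pos _).ne')

lemma prOf_gibbs_le_mul {η Δ ε : ℝ} (hη : 0 ≤ η) (hε : 2 * (η * Δ) ≤ ε) {u v : O → ℝ}
    (h : ∀ o, |u o - v o| ≤ Δ) (T : Set O) :
    prOf (gibbs η u) T ≤ ENNReal.ofReal (Real.exp ε) * prOf (gibbs η v) T := by
  refine pmfOfReal_le_mul _ _ _ _ (Real.exp_pos _).le (fun o => ?_) T
  have hU := sum_exp_pos fun o => -η * u o
  have hV := sum_exp_pos fun o => -η * v o
  have h1 : Real.exp (-η * u o) ≤ Real.exp (η * Δ) * Real.exp (-η * v o) := by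
    rw [← Real.exp_add, Real.exp_le_exp]
    nlinarith [(abs_le.mp (h o)).1]
  have h2 : ∑ o, Real.exp (-η * v o) ≤ Real.exp (η * Δ) * ∑ o, Real.exp (-η * u o) := by
    rw [Finset.mul_sum]
    refine Finset.sum_le_sum fun o _ => ?_
    rw [← Real.exp_add, Real.exp_le_exp]
    nlinarith [(abs_le.mp (h o)).2]
  have h3 : Real.exp (η * Δ) * Real.exp (η * Δ) ≤ Real.exp ε := by
    rw [← Real.exp_add, Real.exp_le_exp]
    linarith
  rw [← mul_div_assoc, div_le_div_iff₀ hU hV]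
  calc Real.exp (-η * u o) * ∑ o, Real.exp (-η * v o)
      ≤ (Real.exp (η * Δ) * Real.exp (-η * v o)) *
          (Real.exp (η * Δ) * ∑ o, Real.exp (-η * u o)) := by gcongr
    _ = (Real.exp (η * Δ) * Real.exp (η * Δ)) * Real.exp (-η * v o) *
          ∑ o, Real.exp (-η * u o) := by ring
    _ ≤ _ := by gcongr

lemma prOf_gibbs_cost_gt_le {η : ℝ} (hη : 0 ≤ η) (u : O → ℝ) (o₀ : O) (l : ℝ) :
    prOf (gibbs η u) {o | u o₀ + l < u o} ≤
      ENNReal.ofReal (Fintype.card O * Real.exp (-(η * l))) := by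
  classical
  rw [prOf_eq_ofReal_pmfMean, gibbs, pmfMean_pmfOfReal]
  refine ENNReal.ofReal_le_ofReal ?_
  rw [← nsmul_eq_mul]
  refine Finset.sum_le_card_nsmul _ _ _ fun o _ => ?_
  by_cases ho : u o₀ + l < u o
  · simp only [Set.mem_ofPred_eq, ho, if_true, mul_one]
    rw [div_le_iff₀ (sum_exp_pos _)]
    have h1 : Real.exp (-η * u o₀) ≤ ∑ o', Real.exp (-η * u o') :=
      Finset.single_le_sum (f := fun o' => Real.exp (-η * u o'))
        (fun o' _ => (Real.exp_pos _).le) (Finset.mem_univ o₀)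
    refine le_trans ?_ (mul_le_mul_of_nonneg_left h1 (Real.exp_pos _).le)
    rw [← Real.exp_add, Real.exp_le_exp]
    nlinarith
  · simp only [Set.mem_ofPred_eq, ho, if_false, mul_zero]
    exact (Real.exp_pos _).le

end ExpMech

/-! ### Local frequency estimation -/

/-- The sign `±1` of a bit. -/
def boolSign (s : Bool) : ℝ := if s then 1 else -1

lemma boolSign_mul_self (s : Bool) : boolSign s * boolSign s = 1 := by
  cases s <;> simp [boolSign]

lemma abs_boolSign (s : Bool) : |boolSign s| = 1 := by
  cases s <;> simp [boolSign]

lemma boolSign_not (s : Bool) : boolSign (!s) = -boolSign s := by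
  cases s <;> simp [boolSign]

lemma sum_boolSign_mul {V : Type*} [Fintype V] [DecidableEq V] (u v : V) :
    ∑ r : V → Bool, boolSign (r u) * boolSign (r v) =
      if u = v then (Fintype.card (V → Bool) : ℝ) else 0 := by
  split_ifs with h
  · subst h
    simp [boolSign_mul_self]
  · refine Finset.sum_involution (fun r _ => Function.update r u (!r u)) ?_ ?_ ?_ ?_
    · intro r _
      simp [Function.update_of_ne (Ne.symm h), boolSign_not]
    · intro r _ _ hr
      have := congrFun hr u
      simp at this
    · intro r _
      exact Finset.mem_univ _
    · intro r _
      simp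

/-- The estimator, from one message, of the number of levels `l` at which the user's value is
`v l`, weighted by `c l`. -/
noncomputable def signEstimate {L V : Type*} [Fintype L] (γ : ℝ) (c : L → ℝ) (v : L → V)
    (w : (L × (V → Bool)) × Bool) : ℝ :=
  Fintype.card L * c w.1.1 * (boolSign (w.1.2 (v w.1.1)) * boolSign w.2) / γ

lemma abs_signEstimate_le {L V : Type*} [Fintype L] {γ : ℝ} (h₀ : 0 < γ)
    {c : L → ℝ} (hc : ∀ l, |c l| ≤ 1)
    (v : L → V) (w : (L × (V → Bool)) × Bool) : |signEstimate γ c v w| ≤ Fintype.card L / γ := by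
  unfold signEstimate
  rw [abs_div, abs_mul, abs_mul, abs_mul, abs_boolSign, abs_boolSign, abs_of_pos h₀, Nat.abs_cast]
  gcongr
  have := hc w.1.1
  have h2 : (0 : ℝ) ≤ Fintype.card L := by positivity
  nlinarith

section LocalEstimator

variable {L V Z : Type*} [Fintype L] [Nonempty L] [Fintype V] [DecidableEq V]

/-- Weight of the message `w`, when a user whose value at level `l` is `node l` picks a uniform
level and a uniform sign function, and reports the sign of its value with bias `γ`. -/
noncomputable def signWeight (γ : ℝ) (node : L → V) (w : (L × (V → Bool)) × Bool) : ℝ :=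
  (Fintype.card L : ℝ)⁻¹ * (Fintype.card (V → Bool) : ℝ)⁻¹ *
    ((1 + γ * (boolSign (w.1.2 (node w.1.1)) * boolSign w.2)) / 2)

lemma abs_boolSign_mul_le {γ : ℝ} (h₀ : 0 ≤ γ) (s s' : Bool) :
    |γ * (boolSign s * boolSign s')| ≤ γ := by
  rw [abs_mul, abs_mul, abs_boolSign, abs_boolSign, mul_one, mul_one, abs_of_nonneg h₀]

lemma signWeight_nonneg {γ : ℝ} (h₀ : 0 ≤ γ) (h₁ : γ ≤ 1) (node : L → V)
    (w : (L × (V → Bool)) × Bool) : 0 ≤ signWeight γ node w := by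
  have := (abs_le.mp (abs_boolSign_mul_le h₀ (w.1.2 (node w.1.1)) w.2)).1
  unfold signWeight
  have h2 : 0 ≤ 1 + γ * (boolSign (w.1.2 (node w.1.1)) * boolSign w.2) := by linarith
  positivity

lemma sum_signWeight (γ : ℝ) (node : L → V) : ∑ w, signWeight γ node w = 1 := by
  have hL : (Fintype.card L : ℝ) ≠ 0 := by exact_mod_cast Fintype.card_ne_zero
  have hV : (Fintype.card (V → Bool) : ℝ) ≠ 0 := by exact_mod_cast Fintype.card_ne_zero
  have h : ∀ x : L × (V → Bool), ∑ s, signWeight γ node (x, s) =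
      (Fintype.card L : ℝ)⁻¹ * (Fintype.card (V → Bool) : ℝ)⁻¹ := by
    intro x
    simp only [signWeight, Fintype.sum_bool, boolSign]
    simp only [if_true, Bool.false_eq_true, if_false]
    ring
  rw [Fintype.sum_prod_type]
  simp only [h, Finset.sum_const, Finset.card_univ, Fintype.card_prod, nsmul_eq_mul]
  push_cast
  rw [mul_mul_mul_comm, mul_inv_cancel₀ hL, one_mul]
  exact_mod_cast mul_inv_cancel₀ hV

/-- The local randomizer reporting a noisy sign of the user's value at a random level. -/
noncomputable def signRandomizer (γ : ℝ) (h₀ : 0 ≤ γ) (h₁ : γ ≤ 1) (node : L → Z → V) (z : Z) :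
    PMF ((L × (V → Bool)) × Bool) :=
  pmfOfReal (signWeight γ fun l => node l z) (signWeight_nonneg h₀ h₁ _) (sum_signWeight γ _)

lemma dpRand_signRandomizer {ε γ : ℝ} (h₀ : 0 ≤ γ) (h₁ : γ ≤ 1) (hε : 1 + γ ≤ (1 + ε) * (1 - γ))
    (node : L → Z → V) : DPRand ε (signRandomizer γ h₀ h₁ node) := by
  intro z z' T
  refine pmfOfReal_le_mul _ _ _ _ (Real.exp_pos _).le (fun w => ?_) T
  have h1 := (abs_le.mp (abs_boolSign_mul_le h₀ (w.1.2 (node w.1.1 z)) w.2)).2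
  have h2 := (abs_le.mp (abs_boolSign_mul_le h₀ (w.1.2 (node w.1.1 z')) w.2)).1
  have h3 := Real.add_one_le_exp ε
  unfold signWeight
  rw [mul_left_comm (Real.exp ε)]
  refine mul_le_mul_of_nonneg_left ?_ (by positivity)
  rw [← mul_div_assoc]
  refine div_le_div_of_nonneg_right ?_ zero_le_two
  calc _ ≤ 1 + γ := by linarith
    _ ≤ (1 + ε) * (1 - γ) := hε
    _ ≤ Real.exp ε * (1 - γ) := by
      have : 0 ≤ 1 - γ := by linarith
      gcongr
      linarith
    _ ≤ _ := by
      gcongr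
      linarith

lemma pmfMean_signRandomizer {γ : ℝ} (h₀ : 0 < γ) (h₁ : γ ≤ 1) (node : L → Z → V)
    (c : L → ℝ) (v : L → V) (z : Z) :
    pmfMean (signRandomizer γ h₀.le h₁ node z) (signEstimate γ c v) =
      ∑ l, c l * if node l z = v l then 1 else 0 := by
  have hL : (Fintype.card L : ℝ) ≠ 0 := by exact_mod_cast Fintype.card_ne_zero
  have hV : (Fintype.card (V → Bool) : ℝ) ≠ 0 := by exact_mod_cast Fintype.card_ne_zero
  have hbit : ∀ l (r : V → Bool),
      ∑ s, signWeight γ (fun l => node l z) ((l, r), s) * signEstimate γ c v ((l, r), s) =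
        (Fintype.card (V → Bool) : ℝ)⁻¹ * c l * (boolSign (r (node l z)) * boolSign (r (v l))) := by
    intro l r
    simp only [signWeight, signEstimate, Fintype.sum_bool]
    simp only [show boolSign true = 1 from rfl, show boolSign false = -1 from rfl]
    field_simp
    ring
  rw [signRandomizer, pmfMean_pmfOfReal, Fintype.sum_prod_type, Fintype.sum_prod_type]
  simp only [hbit, ← Finset.mul_sum, sum_boolSign_mul]
  refine Finset.sum_congr rfl fun l _ => ?_
  split_ifs with h
  · field_simp
  · simp

end LocalEstimator

/-! ### Thresholds and binary search -/

lemma bitsToNat_lt {b : ℕ} (y : Fin b → Bool) : bitsToNat y < 2 ^ b := by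
  have h : bitsToNat y ≤ ∑ i ∈ Finset.range b, 2 ^ i := by
    rw [bitsToNat, ← Fin.sum_univ_eq_sum_range]
    exact Finset.sum_le_sum fun i _ => by split_ifs <;> simp
  exact h.trans_lt (Nat.geomSum_lt le_rfl fun i hi => Finset.mem_range.mp hi)

/-- The indicator of `y < t` as a sum over the dyadic intervals decomposing `[0, t)`. -/
lemma sum_dyadic_indicator (b : ℕ) {y t : ℕ} (hy : y < 2 ^ b) (ht : t < 2 ^ b) :
    (∑ i : Fin b, (if t / 2 ^ (i : ℕ) % 2 = 1 then (1 : ℝ) else 0) *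
      if y / 2 ^ (i : ℕ) = t / 2 ^ (i : ℕ) - 1 then 1 else 0) = if y < t then 1 else 0 := by
  induction b generalizing y t with
  | zero =>
    have h : ¬ y < t := by simp at hy ht; omega
    simp [h]
  | succ b ih =>
    have hdiv : ∀ x i : ℕ, x / 2 ^ (i + 1) = x / 2 / 2 ^ i := fun x i => by
      rw [pow_succ', Nat.div_div_eq_div_mul]
    simp only [Fin.sum_univ_succ, Fin.val_succ, hdiv, Fin.val_zero, pow_zero, Nat.div_one]
    rw [ih (by rw [pow_succ] at hy; omega) (by rw [pow_succ] at ht; omega)]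
    split_ifs <;> first | omega | norm_num

/-- Binary search for a point of `[lo, lo + 2 ^ i)` at which `F` is close to `p`. -/
noncomputable def levelSearch (F : ℕ → ℝ) (p a : ℝ) : ℕ → ℕ → ℕ
  | 0, lo => lo
  | i + 1, lo =>
    if |F (lo + 2 ^ i) - p| ≤ 3 * a then lo + 2 ^ i
    else if p < F (lo + 2 ^ i) then levelSearch F p a i lo
    else levelSearch F p a i (lo + 2 ^ i)

/-- The points probed by the exact binary search for `t` in `[lo, lo + 2 ^ i)`. -/
def searchPath (t : ℕ) : ℕ → ℕ → Finset ℕ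
  | 0, _ => ∅
  | i + 1, lo =>
    insert (lo + 2 ^ i) (searchPath t i (if t < lo + 2 ^ i then lo else lo + 2 ^ i))

lemma card_searchPath_le (t i lo : ℕ) : (searchPath t i lo).card ≤ i := by
  induction i generalizing lo with
  | zero => simp [searchPath]
  | succ i ih => exact (Finset.card_insert_le _ _).trans (Nat.succ_le_succ (ih _))

lemma lt_of_mem_searchPath {t i lo v : ℕ} (hv : v ∈ searchPath t i lo) : v < lo + 2 ^ i := by
  induction i generalizing lo with
  | zero => simp [searchPath] at hv
  | succ i ih =>
    have h2 : 0 < 2 ^ i := by positivity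
    rw [searchPath, Finset.mem_insert] at hv
    rw [pow_succ]
    rcases hv with rfl | hv
    · omega
    · have := ih hv
      split_ifs at this <;> omega

lemma abs_levelSearch_sub_le {G F : ℕ → ℝ} (hG : Monotone G) {p a : ℝ} {t : ℕ} (ha : 0 ≤ a)
    (hp : |p - G t| ≤ a) (i lo : ℕ) (hlo : lo ≤ t) (hhi : t < lo + 2 ^ i)
    (hF : ∀ v ∈ searchPath t i lo, |F v - G v| ≤ a) :
    |G (levelSearch F p a i lo) - G t| ≤ 5 * a := by
  induction i generalizing lo with
  | zero =>
    obtain rfl : lo = t := by simp at hhi; omega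
    simp [levelSearch, ha]
  | succ i ih =>
    rw [searchPath] at hF
    have hv := hF _ (Finset.mem_insert_self _ _)
    have hrec := fun v hv => hF v (Finset.mem_insert_of_mem hv)
    rw [abs_le] at hp hv
    rw [levelSearch]
    split_ifs with h1 h2
    · rw [abs_le] at h1 ⊢
      constructor <;> linarith
    · have ht : t < lo + 2 ^ i := by
        by_contra hcon
        have := hG (not_lt.mp hcon)
        refine h1 (abs_le.mpr ⟨?_, ?_⟩) <;> linarith
      rw [if_pos ht] at hrec
      exact ih lo hlo ht hrec
    · have ht : ¬ t < lo + 2 ^ i := by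
        intro hcon
        have := hG hcon.le
        refine h1 (abs_le.mpr ⟨?_, ?_⟩) <;> linarith
      rw [if_neg ht] at hrec
      exact ih (lo + 2 ^ i) (not_lt.mp ht) (by rw [pow_succ] at hhi; omega) hrec

/-- A monotone function with values in `[0, 1]` has a small family of brackets. -/
lemma exists_bracketing {F : ℕ → ℝ} (h₀ : ∀ t, 0 ≤ F t) (h₁ : ∀ t, F t ≤ 1)
    (M : ℕ) {N : ℕ} (hN : 0 < N) :
    ∃ G : Finset ℕ, G.card ≤ 2 * (N + 1) ∧
      ∀ t < M, ∃ l ∈ G, ∃ u ∈ G, l ≤ t ∧ t ≤ u ∧ F u - F l ≤ 1 / N := by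
  classical
  have hN' : (0 : ℝ) < N := by exact_mod_cast hN
  set A : ℕ → Finset ℕ := fun j => (Finset.range M).filter fun t => ⌊F t * N⌋₊ = j with hA
  set lo : ℕ → ℕ := fun j => sInf (A j : Set ℕ) with hlo
  set hi : ℕ → ℕ := fun j => (A j).sup id with hhi
  refine ⟨(Finset.range (N + 1)).image lo ∪ (Finset.range (N + 1)).image hi, ?_, fun t ht => ?_⟩
  · refine (Finset.card_union_le _ _).trans ?_
    have h1 := Finset.card_image_le (s := Finset.range (N + 1)) (f := lo)
    have h2 := Finset.card_image_le (s := Finset.range (N + 1)) (f := hi)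
    rw [Finset.card_range] at h1 h2
    omega
  · set j := ⌊F t * N⌋₊ with hj
    have hjN : j ∈ Finset.range (N + 1) := by
      rw [Finset.mem_range, Nat.lt_succ_iff, hj]
      refine Nat.floor_le_of_le ?_
      have := h₁ t
      nlinarith
    have htA : t ∈ A j := Finset.mem_filter.mpr ⟨Finset.mem_range.mpr ht, rfl⟩
    have hloA : lo j ∈ A j := Finset.mem_coe.mp (Nat.sInf_mem (s := (A j : Set ℕ)) ⟨t, htA⟩)
    have hhiA : hi j ∈ A j := by
      obtain ⟨x, hx, hxe⟩ := Finset.exists_mem_eq_sup (A j) ⟨t, htA⟩ id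
      rw [hhi]
      simp only
      rw [hxe]
      exact hx
    refine ⟨lo j, Finset.mem_union_left _ (Finset.mem_image_of_mem _ hjN), hi j,
      Finset.mem_union_right _ (Finset.mem_image_of_mem _ hjN), Nat.sInf_le htA,
      Finset.le_sup (f := id) htA, ?_⟩
    have e1 := (Finset.mem_filter.mp hloA).2
    have e2 := (Finset.mem_filter.mp hhiA).2
    have b1 := Nat.floor_le (mul_nonneg (h₀ (lo j)) hN'.le)
    have b2 := Nat.lt_floor_add_one (F (hi j) * N)
    rw [e1] at b1
    rw [e2] at b2
    rw [le_div_iff₀ hN']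
    linarith

/-! ### Hypotheses and their errors -/

section Hypotheses

variable {c b : ℕ}

/-- The parity-threshold function with an integer threshold. -/
def parityThresh (k : Fin c → Bool) (t : ℕ) (z : (Fin c → Bool) × (Fin b → Bool)) : Bool :=
  xor (Par k z.1) (decide (t ≤ bitsToNat z.2))

/-- The indicator that the second coordinate is below `t`. -/
noncomputable def belowInd (t : ℕ) (z : (Fin c → Bool) × (Fin b → Bool)) : ℝ :=
  if bitsToNat z.2 < t then 1 else 0

/-- The indicator that a hypothesis disagrees with a label. -/
noncomputable def disInd (k : Fin c → Bool) (t : ℕ)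
    (z : ((Fin c → Bool) × (Fin b → Bool)) × Bool) : ℝ :=
  if parityThresh k t z.1 ≠ z.2 then 1 else 0

lemma belowInd_nonneg (t : ℕ) (z : (Fin c → Bool) × (Fin b → Bool)) : 0 ≤ belowInd t z := by
  unfold belowInd; split_ifs <;> norm_num

lemma belowInd_le_one (t : ℕ) (z : (Fin c → Bool) × (Fin b → Bool)) : belowInd t z ≤ 1 := by
  unfold belowInd; split_ifs <;> norm_num

lemma disInd_nonneg (k : Fin c → Bool) (t : ℕ)
    (z : ((Fin c → Bool) × (Fin b → Bool)) × Bool) : 0 ≤ disInd k t z := by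
  unfold disInd; split_ifs <;> norm_num

lemma disInd_le_one (k : Fin c → Bool) (t : ℕ)
    (z : ((Fin c → Bool) × (Fin b → Bool)) × Bool) : disInd k t z ≤ 1 := by
  unfold disInd; split_ifs <;> norm_num

lemma belowInd_mono (z : (Fin c → Bool) × (Fin b → Bool)) : Monotone fun t => belowInd t z := by
  intro s t h
  simp only [belowInd]
  split_ifs <;> first | omega | norm_num

lemma abs_disInd_sub_le (k : Fin c → Bool) {s t : ℕ} (h : s ≤ t)
    (z : ((Fin c → Bool) × (Fin b → Bool)) × Bool) :
    |disInd k t z - disInd k s z| ≤ belowInd t z.1 - belowInd s z.1 := by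
  by_cases h1 : s ≤ bitsToNat z.1.2
  · by_cases h2 : t ≤ bitsToNat z.1.2
    · simp [disInd, belowInd, parityThresh, h1, h2, not_lt.mpr h1, not_lt.mpr h2]
    · have h3 : belowInd t z.1 - belowInd s z.1 = 1 := by
        simp [belowInd, not_lt.mpr h1, not_le.mp h2]
      have := disInd_nonneg k t z
      have := disInd_nonneg k s z
      have := disInd_le_one k t z
      have := disInd_le_one k s z
      rw [h3, abs_le]
      constructor <;> linarith
  · have h2 : ¬ t ≤ bitsToNat z.1.2 := fun h2 => h1 (h.trans h2)
    simp [disInd, belowInd, parityThresh, h1, h2, not_le.mp h1, not_le.mp h2]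

variable (D : PMF ((Fin c → Bool) × (Fin b → Bool)))

/-- The probability that the second coordinate is below `t`. -/
noncomputable def cdfBelow (t : ℕ) : ℝ := pmfMean D (belowInd t)

lemma cdfBelow_mono : Monotone (cdfBelow D) := fun _ _ h =>
  pmfMean_mono D fun z => belowInd_mono z h

lemma cdfBelow_nonneg (t : ℕ) : 0 ≤ cdfBelow D t := by
  rw [← pmfMean_const D 0]
  exact pmfMean_mono D fun z => belowInd_nonneg t z

lemma cdfBelow_le_one (t : ℕ) : cdfBelow D t ≤ 1 := by
  rw [← pmfMean_const D 1]
  exact pmfMean_mono D fun z => belowInd_le_one t z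

variable (f : (Fin c → Bool) × (Fin b → Bool) → Bool)

/-- The error of a parity-threshold hypothesis with respect to the labeling function `f`. -/
noncomputable def disMean (k : Fin c → Bool) (t : ℕ) : ℝ :=
  pmfMean D fun z => disInd k t (z, f z)

lemma errD_parityThresh (k : Fin c → Bool) (t : ℕ) :
    errD D f (parityThresh k t) = ENNReal.ofReal (disMean D f k t) := by
  classical
  rw [errD, prOf_eq_ofReal_pmfMean]
  rfl

lemma disMean_nonneg (k : Fin c → Bool) (t : ℕ) : 0 ≤ disMean D f k t := by
  rw [← pmfMean_const D 0]
  exact pmfMean_mono D fun z => disInd_nonneg k t _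

lemma disMean_le_one (k : Fin c → Bool) (t : ℕ) : disMean D f k t ≤ 1 := by
  rw [← pmfMean_const D 1]
  exact pmfMean_mono D fun z => disInd_le_one k t _

lemma disMean_le_add (k : Fin c → Bool) (s t : ℕ) :
    disMean D f k t ≤ disMean D f k s + |cdfBelow D t - cdfBelow D s| := by
  rcases le_total s t with h | h
  · rw [abs_of_nonneg (sub_nonneg.mpr (cdfBelow_mono D h)), cdfBelow, cdfBelow, ← pmfMean_sub,
      disMean, disMean, ← pmfMean_add]
    refine pmfMean_mono D fun z => ?_
    linarith [(abs_le.mp (abs_disInd_sub_le k h (z, f z))).2]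
  · rw [abs_sub_comm, abs_of_nonneg (sub_nonneg.mpr (cdfBelow_mono D h)), cdfBelow, cdfBelow,
      ← pmfMean_sub, disMean, disMean, ← pmfMean_add]
    refine pmfMean_mono D fun z => ?_
    linarith [(abs_le.mp (abs_disInd_sub_le k h (z, f z))).1]

end Hypotheses

/-! ### The curator -/

section Curator

variable {c b m : ℕ}

/-- The empirical cost of a parity `k`, a level `j / N` and a threshold `t`: the number of
disagreements plus the deviation of the empirical rank of `t` from `m * j / N`. -/
noncomputable def thresholdCost (N : ℕ) (S : Fin m → ((Fin c → Bool) × (Fin b → Bool)) × Bool)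
    (k : Fin c → Bool) (j t : ℕ) : ℝ :=
  ∑ i, disInd k t (S i) + |∑ i, belowInd t (S i).1 - m * (j / N : ℝ)|

/-- The cost of a parity and a level, optimized over all thresholds. -/
noncomputable def levelCost (N : ℕ) (S : Fin m → ((Fin c → Bool) × (Fin b → Bool)) × Bool)
    (o : (Fin c → Bool) × Fin (N + 1)) : ℝ :=
  ⨅ t : Fin (2 ^ b), thresholdCost N S o.1 o.2 t

lemma levelCost_le (N : ℕ) (S : Fin m → ((Fin c → Bool) × (Fin b → Bool)) × Bool)
    (o : (Fin c → Bool) × Fin (N + 1)) {t : ℕ} (ht : t < 2 ^ b) :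
    levelCost N S o ≤ thresholdCost N S o.1 o.2 t :=
  ciInf_le (f := fun t : Fin (2 ^ b) => thresholdCost N S o.1 o.2 t)
    (Set.finite_range _).bddBelow ⟨t, ht⟩

lemma exists_thresholdCost_eq (N : ℕ) (S : Fin m → ((Fin c → Bool) × (Fin b → Bool)) × Bool)
    (o : (Fin c → Bool) × Fin (N + 1)) :
    ∃ t < 2 ^ b, thresholdCost N S o.1 o.2 t = levelCost N S o := by
  obtain ⟨t, ht⟩ := exists_eq_ciInf_of_finite
    (f := fun t : Fin (2 ^ b) => thresholdCost N S o.1 o.2 t)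
  exact ⟨t, t.2, ht⟩

lemma abs_sum_sub_sum_le_of_neighbor {X : Type*} {x x' : Fin m → X} (h : Neighbor x x')
    {φ : X → ℝ} (h₀ : ∀ x, 0 ≤ φ x) (h₁ : ∀ x, φ x ≤ 1) :
    |∑ i, φ (x i) - ∑ i, φ (x' i)| ≤ 1 := by
  obtain ⟨i, hi⟩ := h
  rw [← Finset.sum_sub_distrib, Finset.sum_eq_single i]
  · rw [abs_le]
    constructor <;> linarith [h₀ (x i), h₀ (x' i), h₁ (x i), h₁ (x' i)]
  · intro j _ hj
    rw [hi j hj, sub_self]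
  · simp

lemma Neighbor.symm {X : Type*} {x x' : Fin m → X} (h : Neighbor x x') : Neighbor x' x := by
  obtain ⟨i, hi⟩ := h
  exact ⟨i, fun j hj => (hi j hj).symm⟩

lemma thresholdCost_le_add_two (N : ℕ)
    {S S' : Fin m → ((Fin c → Bool) × (Fin b → Bool)) × Bool} (h : Neighbor S S')
    (k : Fin c → Bool) (j t : ℕ) :
    thresholdCost N S' k j t ≤ thresholdCost N S k j t + 2 := by
  have h1 := (abs_le.mp (abs_sum_sub_sum_le_of_neighbor h (disInd_nonneg k t)
    (disInd_le_one k t))).1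
  have h2 := abs_sum_sub_sum_le_of_neighbor h.symm (φ := fun z => belowInd t z.1)
    (fun z => belowInd_nonneg t z.1) (fun z => belowInd_le_one t z.1)
  have h3 := abs_sub_le (∑ i, belowInd t (S' i).1) (∑ i, belowInd t (S i).1)
    (m * (j / N : ℝ))
  simp only [thresholdCost]
  linarith

lemma levelCost_le_add_two (N : ℕ)
    {S S' : Fin m → ((Fin c → Bool) × (Fin b → Bool)) × Bool} (h : Neighbor S S')
    (o : (Fin c → Bool) × Fin (N + 1)) : levelCost N S' o ≤ levelCost N S o + 2 := by
  obtain ⟨t, ht, hte⟩ := exists_thresholdCost_eq N S o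
  rw [← hte]
  exact (levelCost_le N S' o ht).trans (thresholdCost_le_add_two N h _ _ _)

lemma dpAlg_gibbs_levelCost {ε : ℝ} (hε : 0 ≤ ε) (N : ℕ) :
    DPAlg ε fun S : Fin m → ((Fin c → Bool) × (Fin b → Bool)) × Bool =>
      gibbs (ε / 4) (levelCost N S) := by
  intro S S' h T
  refine prOf_gibbs_le_mul (Δ := 2) (by positivity) (by linarith) (fun o => ?_) T
  rw [abs_le]
  constructor <;> linarith [levelCost_le_add_two N h o, levelCost_le_add_two N h.symm o]

variable (D : PMF ((Fin c → Bool) × (Fin b → Bool)))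
  (f : (Fin c → Bool) × (Fin b → Bool) → Bool)

/-- The samples on which some rank or some error with threshold in `G` is estimated with
accuracy worse than `a`. -/
def badSamples (G : Finset ℕ) (a : ℝ) (m : ℕ) : Set (Fin m → (Fin c → Bool) × (Fin b → Bool)) :=
  ⋃ t ∈ G, ({xs | m * a ≤ |∑ i, belowInd t (xs i) - m * cdfBelow D t|} ∪
    ⋃ k ∈ (Finset.univ : Finset (Fin c → Bool)),
      {xs | m * a ≤ |∑ i, disInd k t (xs i, f (xs i)) - m * disMean D f k t|})

lemma prOf_badSamples_le (G : Finset ℕ) {a : ℝ} (ha : 0 < a) (ha1 : a ≤ 1) (m : ℕ) :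
    prOf (iid D m) (badSamples D f G a m) ≤
      ENNReal.ofReal (G.card * ((2 ^ c + 1) * (2 * Real.exp (-(m * (a ^ 2 / 4)))))) := by
  set δ : ℝ := 2 * Real.exp (-(m * (a ^ 2 / 4))) with hδ
  have hδ0 : 0 ≤ δ := by positivity
  have h1 : ∀ t, prOf (iid D m) {xs | m * a ≤ |∑ i, belowInd t (xs i) - m * cdfBelow D t|} ≤
      ENNReal.ofReal δ := by
    intro t
    have h := prOf_iid_abs_sum_sub_le D (φ := belowInd t) (a := a) (B := 1) ha (by linarith)
      (fun z => by
        have := cdfBelow_nonneg D t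
        have := cdfBelow_le_one D t
        have := belowInd_nonneg t z
        have := belowInd_le_one t z
        change |belowInd t z - cdfBelow D t| ≤ 1
        rw [abs_le]
        constructor <;> linarith) m
    simpa [hδ, cdfBelow] using h
  have h2 : ∀ t k, prOf (iid D m)
      {xs | m * a ≤ |∑ i, disInd k t (xs i, f (xs i)) - m * disMean D f k t|} ≤
      ENNReal.ofReal δ := by
    intro t k
    have h := prOf_iid_abs_sum_sub_le D (φ := fun z => disInd k t (z, f z)) (a := a) (B := 1) ha
      (by linarith) (fun z => by
        have := disMean_nonneg D f k t
        have := disMean_le_one D f k t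
        have := disInd_nonneg k t (z, f z)
        have := disInd_le_one k t (z, f z)
        change |disInd k t (z, f z) - disMean D f k t| ≤ 1
        rw [abs_le]
        constructor <;> linarith) m
    simpa [hδ, disMean] using h
  have h3 : ∀ t ∈ G, prOf (iid D m)
      ({xs | m * a ≤ |∑ i, belowInd t (xs i) - m * cdfBelow D t|} ∪
        ⋃ k ∈ (Finset.univ : Finset (Fin c → Bool)),
          {xs | m * a ≤ |∑ i, disInd k t (xs i, f (xs i)) - m * disMean D f k t|}) ≤
      ENNReal.ofReal ((2 ^ c + 1) * δ) := by
    intro t _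
    refine (prOf_union_le _ _ _).trans ((add_le_add (h1 t)
      (prOf_biUnion_le _ _ _ _ fun k _ => h2 t k)).trans_eq ?_)
    rw [add_mul, one_mul, add_comm, ENNReal.ofReal_add (by positivity) hδ0,
      ENNReal.ofReal_mul (p := 2 ^ c) (by positivity), ENNReal.ofReal_pow (by norm_num)]
    simp
  refine (prOf_biUnion_le _ _ _ _ h3).trans_eq ?_
  rw [ENNReal.ofReal_mul (p := (G.card : ℝ)) (by positivity), ENNReal.ofReal_natCast]

lemma exists_threshold_of_levelCost_le {G : Finset ℕ} {a : ℝ} {N : ℕ} (hNa : 1 / (N : ℝ) ≤ a / 4)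
    (hm : 0 < m)
    (hG : ∀ t < 2 ^ b, ∃ l ∈ G, ∃ u ∈ G, l ≤ t ∧ t ≤ u ∧ cdfBelow D u - cdfBelow D l ≤ 1 / N)
    {xs : Fin m → (Fin c → Bool) × (Fin b → Bool)} (hxs : xs ∉ badSamples D f G (a / 4) m)
    (o : (Fin c → Bool) × Fin (N + 1))
    (ho : levelCost N (fun i => (xs i, f (xs i))) o ≤ m * (a / 2)) :
    ∃ t < 2 ^ b, disMean D f o.1 t ≤ 2 * a ∧ |(o.2 : ℝ) / N - cdfBelow D t| ≤ a := by
  have hm' : (0 : ℝ) < m := by exact_mod_cast hm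
  simp only [badSamples, Set.mem_iUnion, Set.mem_union, Set.mem_ofPred_eq, not_exists, not_or,
    not_le, Finset.mem_univ, forall_true_left] at hxs
  obtain ⟨t, ht, hte⟩ := exists_thresholdCost_eq N (fun i => (xs i, f (xs i))) o
  refine ⟨t, ht, ?_⟩
  rw [← hte, thresholdCost] at ho
  obtain ⟨l, hl, u, hu, hlt, htu, hlu⟩ := hG t ht
  have hl1 := abs_lt.mp (hxs l hl).1
  have hl2 := abs_lt.mp ((hxs l hl).2 o.1)
  have hu1 := abs_lt.mp (hxs u hu).1
  have hcl : ∑ i, belowInd l (xs i) ≤ ∑ i, belowInd t (xs i) :=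
    Finset.sum_le_sum fun i _ => belowInd_mono (xs i) hlt
  have hcu : ∑ i, belowInd t (xs i) ≤ ∑ i, belowInd u (xs i) :=
    Finset.sum_le_sum fun i _ => belowInd_mono (xs i) htu
  have hFl := cdfBelow_mono D hlt
  have hFu := cdfBelow_mono D htu
  have hdis : ∑ i, disInd o.1 l (xs i, f (xs i)) ≤ ∑ i, disInd o.1 t (xs i, f (xs i)) +
      (∑ i, belowInd t (xs i) - ∑ i, belowInd l (xs i)) := by
    rw [← Finset.sum_sub_distrib, ← Finset.sum_add_distrib]
    refine Finset.sum_le_sum fun i _ => ?_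
    linarith [(abs_le.mp (abs_disInd_sub_le o.1 hlt (xs i, f (xs i)))).1]
  have hdis0 : 0 ≤ ∑ i, disInd o.1 t (xs i, f (xs i)) :=
    Finset.sum_nonneg fun i _ => disInd_nonneg _ _ _
  have hrank0 := abs_nonneg (∑ i, belowInd t (xs i) - m * (o.2 / N : ℝ))
  have hrank : |∑ i, belowInd t (xs i) - m * (o.2 / N : ℝ)| ≤ m * (a / 2) := by linarith
  have hdis' : ∑ i, disInd o.1 t (xs i, f (xs i)) ≤ m * (a / 2) := by linarith
  have hN4 : cdfBelow D u - cdfBelow D l ≤ a / 4 := hlu.trans hNa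
  have hmF : m * (cdfBelow D u - cdfBelow D l) ≤ m * (a / 4) := by gcongr
  have hmFl : m * cdfBelow D l ≤ m * cdfBelow D t := by gcongr
  have hmFu : m * cdfBelow D t ≤ m * cdfBelow D u := by gcongr
  have hrank' := abs_le.mp hrank
  constructor
  · have h1 := disMean_le_add D f o.1 l t
    rw [abs_of_nonneg (by linarith)] at h1
    have h2 : m * disMean D f o.1 l ≤ m * (7 / 4 * a) := by nlinarith
    have h3 := le_of_mul_le_mul_left h2 hm'
    linarith
  · rw [abs_le]
    constructor
    · refine le_of_mul_le_mul_left ?_ hm'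
      nlinarith
    · refine le_of_mul_le_mul_left ?_ hm'
      nlinarith

lemma exists_levelCost_le {N : ℕ} (hN : 0 < N) (k : Fin c → Bool) {t : ℕ} (ht : t < 2 ^ b)
    (hm : 0 < m) (xs : Fin m → (Fin c → Bool) × (Fin b → Bool)) :
    ∃ j : Fin (N + 1),
      levelCost N (fun i => (xs i, parityThresh k t (xs i))) (k, j) ≤ m * (1 / N : ℝ) := by
  have hm' : (0 : ℝ) < m := by exact_mod_cast hm
  have hN' : (0 : ℝ) < N := by exact_mod_cast hN
  set q : ℝ := ∑ i, belowInd t (xs i) with hq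
  have hq0 : 0 ≤ q := Finset.sum_nonneg fun i _ => belowInd_nonneg _ _
  have hqm : q ≤ m := by
    refine (Finset.sum_le_card_nsmul _ _ 1 fun i _ => belowInd_le_one t (xs i)).trans_eq ?_
    simp
  have hj : ⌊q / m * N⌋₊ < N + 1 := by
    rw [Nat.lt_succ_iff]
    refine Nat.floor_le_of_le ?_
    have : q / m ≤ 1 := (div_le_one hm').mpr hqm
    nlinarith
  refine ⟨⟨_, hj⟩, (levelCost_le N _ _ ht).trans ?_⟩
  have h0 : ∑ i, disInd k t (xs i, parityThresh k t (xs i)) = 0 := by simp [disInd]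
  simp only [thresholdCost]
  rw [h0, zero_add, ← hq]
  have h1 := Nat.floor_le (show 0 ≤ q / m * N by positivity)
  have h2 := Nat.lt_floor_add_one (q / m * N)
  set x : ℝ := (⌊q / m * N⌋₊ : ℝ)
  have e : q - m * (x / N) = m * ((q / m * N - x) / N) := by field_simp
  rw [e, abs_mul, abs_of_pos hm', abs_div, abs_of_pos hN', abs_of_nonneg (by linarith)]
  gcongr
  linarith

end Curator

/-! ### The local users -/

section LocalUsers

variable {c b : ℕ}

/-- The value of a labeled example at each level: the leading bits of the second coordinate at
level `some i`, the label at level `none`. -/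
def userNode : Option (Fin b) → ((Fin c → Bool) × (Fin b → Bool)) × Bool → Fin (2 ^ b + 1)
  | some i, z => Fin.ofNat _ (bitsToNat z.1.2 / 2 ^ (i : ℕ))
  | none, z => Fin.ofNat _ (if z.2 then 1 else 0)

/-- The levels used by the dyadic decomposition of `[0, t)`. -/
noncomputable def rankCoeff (t : ℕ) : Option (Fin b) → ℝ
  | some i => if t / 2 ^ (i : ℕ) % 2 = 1 then 1 else 0
  | none => 0

/-- The dyadic intervals in the decomposition of `[0, t)`. -/
def rankNode (t : ℕ) : Option (Fin b) → Fin (2 ^ b + 1)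
  | some i => Fin.ofNat _ (t / 2 ^ (i : ℕ) - 1)
  | none => 0

/-- The level carrying the label. -/
noncomputable def labelCoeff : Option (Fin b) → ℝ
  | some _ => 0
  | none => 1

/-- The messages sent by local users. -/
abbrev UserMsg (b : ℕ) : Type := (Option (Fin b) × (Fin (2 ^ b + 1) → Bool)) × Bool

/-- The estimator of the indicator `y < t` from a message. -/
noncomputable def rankEstimate (γ : ℝ) (t : ℕ) : UserMsg b → ℝ :=
  signEstimate γ (rankCoeff t) (rankNode t)

/-- The estimator of the indicator of a false label from a message. -/
noncomputable def labelEstimate (γ : ℝ) : UserMsg b → ℝ :=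
  signEstimate γ labelCoeff fun _ => 0

lemma abs_rankCoeff_le (t : ℕ) (l : Option (Fin b)) : |rankCoeff t l| ≤ 1 := by
  cases l <;> simp only [rankCoeff]
  · simp
  · split_ifs <;> simp

lemma abs_labelCoeff_le (l : Option (Fin b)) : |labelCoeff l| ≤ 1 := by
  cases l <;> simp [labelCoeff]

lemma ofNat_eq_ofNat_iff {x y d : ℕ} (hx : x ≤ d) (hy : y ≤ d) :
    Fin.ofNat (d + 1) x = Fin.ofNat (d + 1) y ↔ x = y := by
  rw [Fin.ext_iff, Fin.val_ofNat, Fin.val_ofNat, Nat.mod_eq_of_lt (by omega),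
    Nat.mod_eq_of_lt (by omega)]

variable {γ : ℝ} (h₀ : 0 < γ) (h₁ : γ ≤ 1)

lemma pmfMean_rankEstimate {t : ℕ} (ht : t < 2 ^ b)
    (z : ((Fin c → Bool) × (Fin b → Bool)) × Bool) :
    pmfMean (signRandomizer γ h₀.le h₁ userNode z) (rankEstimate γ t) = belowInd t z.1 := by
  have hy := bitsToNat_lt z.1.2
  rw [rankEstimate, pmfMean_signRandomizer h₀ h₁, Fintype.sum_option, belowInd,
    ← sum_dyadic_indicator b hy ht]
  simp only [rankCoeff, zero_mul, zero_add]
  refine Finset.sum_congr rfl fun i _ => ?_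
  have h1 := Nat.div_le_self (bitsToNat z.1.2) (2 ^ (i : ℕ))
  have h2 := Nat.div_le_self t (2 ^ (i : ℕ))
  have h3 : userNode (some i) z = rankNode t (some i) ↔
      bitsToNat z.1.2 / 2 ^ (i : ℕ) = t / 2 ^ (i : ℕ) - 1 :=
    ofNat_eq_ofNat_iff (by omega) (by omega)
  simp only [h3]

lemma pmfMean_labelEstimate (z : ((Fin c → Bool) × (Fin b → Bool)) × Bool) :
    pmfMean (signRandomizer γ h₀.le h₁ userNode z) (labelEstimate γ) = if z.2 then 0 else 1 := by
  rw [labelEstimate, pmfMean_signRandomizer h₀ h₁, Fintype.sum_option]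
  cases hz : z.2 <;> simp [labelCoeff, userNode, hz]

variable (D : PMF ((Fin c → Bool) × (Fin b → Bool)))
  (f : (Fin c → Bool) × (Fin b → Bool) → Bool)

/-- The law of the message of a user whose example is drawn from `D` and labeled by `f`. -/
noncomputable def msgLaw : PMF (UserMsg b) :=
  D.bind fun z => signRandomizer γ h₀.le h₁ userNode (z, f z)

lemma prOf_iid_msgLaw_le {φ : UserMsg b → ℝ} (hφ : ∀ w, |φ w| ≤ Fintype.card (Option (Fin b)) / γ)
    (n : ℕ) {t : ℕ} (hmean : pmfMean (msgLaw h₀ h₁ D f) φ = cdfBelow D t) {a : ℝ} (ha : 0 < a)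
    (ha1 : a ≤ 1) :
    prOf (iid (msgLaw h₀ h₁ D f) n) {ms | n * a ≤ |∑ i, φ (ms i) - n * cdfBelow D t|} ≤
      ENNReal.ofReal (2 * Real.exp (-(n * (a ^ 2 / (4 * ((b + 1) / γ + 1) ^ 2))))) := by
  have hB : (0 : ℝ) ≤ (b + 1) / γ := by positivity
  rw [← hmean]
  refine prOf_iid_abs_sum_sub_le _ ha (by linarith) (fun w => ?_) n
  have h := hφ w
  have h2 := cdfBelow_nonneg D t
  have h3 := cdfBelow_le_one D t
  rw [Fintype.card_option, Fintype.card_fin] at h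
  push_cast at h
  rw [hmean]
  rw [abs_le] at h ⊢
  constructor <;> linarith

/-- The probability that the binary search of the referee, aiming at a level `p ms` close to the
rank of `t`, ends at a point whose rank is far from that of `t`. -/
lemma prOf_levelSearch_far_le (n : ℕ) (hn : b ≠ 0 → 0 < n) {t : ℕ} (ht : t < 2 ^ b)
    {a : ℝ} (ha : 0 < a) (ha1 : a ≤ 1) (p : (Fin n → UserMsg b) → ℝ)
    (Bad : Set (Fin n → UserMsg b)) {δ : ℝ} (hδ : 0 ≤ δ)
    (hBad : prOf (iid (msgLaw h₀ h₁ D f) n) Bad ≤ ENNReal.ofReal δ)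
    (hp : ∀ ms ∉ Bad, |p ms - cdfBelow D t| ≤ a) :
    prOf (iid (msgLaw h₀ h₁ D f) n)
      {ms | ¬ |cdfBelow D (levelSearch (fun v => (∑ i, rankEstimate γ v (ms i)) / n) (p ms) a b 0)
        - cdfBelow D t| ≤ 5 * a} ≤
      ENNReal.ofReal
        (δ + b * (2 * Real.exp (-(n * (a ^ 2 / (4 * ((b + 1) / γ + 1) ^ 2)))))) := by
  set δ' : ℝ := 2 * Real.exp (-(n * (a ^ 2 / (4 * ((b + 1) / γ + 1) ^ 2)))) with hδ'
  have hδ'0 : 0 ≤ δ' := by positivity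
  have hpath : prOf (iid (msgLaw h₀ h₁ D f) n) (⋃ v ∈ searchPath t b 0,
      {ms | n * a ≤ |∑ i, rankEstimate γ v (ms i) - n * cdfBelow D v|}) ≤
      ENNReal.ofReal (b * δ') := by
    refine (prOf_biUnion_le _ _ _ (ENNReal.ofReal δ') fun v hv => ?_).trans ?_
    · refine prOf_iid_msgLaw_le h₀ h₁ D f
        (fun w => abs_signEstimate_le h₀ (abs_rankCoeff_le v) _ w) n ?_ ha ha1
      have hv' := lt_of_mem_searchPath hv
      rw [zero_add] at hv'
      rw [msgLaw, pmfMean_bind]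
      exact congrArg _ (funext fun z => pmfMean_rankEstimate h₀ h₁ hv' (z, f z))
    · rw [ENNReal.ofReal_mul (Nat.cast_nonneg b), ENNReal.ofReal_natCast]
      gcongr
      exact card_searchPath_le t b 0
  rw [ENNReal.ofReal_add hδ (by positivity)]
  refine le_trans (prOf_mono _ ?_) ((prOf_union_le _ _ _).trans (add_le_add hBad hpath))
  intro ms hms
  by_contra hcon
  rw [Set.mem_union, not_or] at hcon
  refine hms (abs_levelSearch_sub_le (cdfBelow_mono D) ha.le (hp ms hcon.1) b 0 (Nat.zero_le _)
    (by rwa [zero_add]) fun v hv => ?_)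
  have hb : b ≠ 0 := by
    rintro rfl
    simp [searchPath] at hv
  have hn' : (0 : ℝ) < n := by exact_mod_cast hn hb
  have h2 := hcon.2
  simp only [Set.mem_iUnion, Set.mem_ofPred_eq, not_exists, not_le] at h2
  have h3 := h2 v hv
  have e : (∑ i, rankEstimate γ v (ms i)) / n - cdfBelow D v =
      (∑ i, rankEstimate γ v (ms i) - n * cdfBelow D v) / n := by field_simp
  rw [e, abs_div, abs_of_pos hn', div_le_iff₀ hn', mul_comm a]
  exact h3.le

end LocalUsers

/-! ### The protocol -/

section Protocol

variable {c b n : ℕ}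

/-- The level the referee aims at: the one reported by the curator or, when there is no parity
to learn, the frequency of false labels estimated from the messages. -/
noncomputable def targetLevel (γ : ℝ) (N : ℕ) (o : (Fin c → Bool) × Fin (N + 1))
    (ms : Fin n → UserMsg b) : ℝ :=
  if c = 0 then (∑ i, labelEstimate γ (ms i)) / n else o.2 / N

/-- The hypothesis chosen by the referee. -/
noncomputable def refereeHyp (γ a : ℝ) (N : ℕ) (o : (Fin c → Bool) × Fin (N + 1))
    (ms : Fin n → UserMsg b) : (Fin c → Bool) × (Fin b → Bool) → Bool :=
  parityThresh o.1
    (levelSearch (fun v => (∑ i, rankEstimate γ v (ms i)) / n) (targetLevel γ N o ms) a b 0)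

variable {γ : ℝ} (h₀ : 0 < γ) (h₁ : γ ≤ 1) (D : PMF ((Fin c → Bool) × (Fin b → Bool)))
  (f : (Fin c → Bool) × (Fin b → Bool) → Bool)

lemma prOf_refereeHyp_le {N : ℕ} (o : (Fin c → Bool) × Fin (N + 1)) (hn : b ≠ 0 → 0 < n)
    {t : ℕ} (ht : t < 2 ^ b) {a α : ℝ} (ha : 0 < a) (ha1 : a ≤ 1) (hα : 7 * a ≤ α)
    (herr : disMean D f o.1 t ≤ 2 * a)
    (Bad : Set (Fin n → UserMsg b)) {δ : ℝ} (hδ : 0 ≤ δ)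
    (hBad : prOf (iid (msgLaw h₀ h₁ D f) n) Bad ≤ ENNReal.ofReal δ)
    (hp : ∀ ms ∉ Bad, |targetLevel γ N o ms - cdfBelow D t| ≤ a) :
    prOf ((iid D n).bind fun ys =>
      (pmfPi n fun i => signRandomizer γ h₀.le h₁ userNode (ys i, f (ys i))).bind fun ms =>
        PMF.pure (refereeHyp γ a N o ms)) {h | errD D f h ≤ ENNReal.ofReal α}ᶜ ≤
      ENNReal.ofReal
        (δ + b * (2 * Real.exp (-(n * (a ^ 2 / (4 * ((b + 1) / γ + 1) ^ 2)))))) := by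
  rw [← PMF.bind_bind,
    iid_bind_pmfPi D (fun z => signRandomizer γ h₀.le h₁ userNode (z, f z)) n]
  refine (prOf_bind_le _ _ _ _ _ 0
    (prOf_levelSearch_far_le h₀ h₁ D f n hn ht ha ha1 (targetLevel γ N o) Bad hδ hBad hp)
    fun ms hms => ?_).trans_eq (add_zero _)
  have hms' := not_not.mp hms
  have hgood : errD D f (refereeHyp γ a N o ms) ≤ ENNReal.ofReal α := by
    rw [refereeHyp, errD_parityThresh]
    refine ENNReal.ofReal_le_ofReal ((disMean_le_add D f o.1 t _).trans ?_)
    linarith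
  rw [prOf, PMF.toOuterMeasure_pure_apply, if_neg]
  exact not_not.mpr hgood

lemma par_of_isEmpty [IsEmpty (Fin c)] (k x : Fin c → Bool) : Par k x = false := by
  simp [Par, xorFold]

lemma exists_hybrid_protocol {α β ε a : ℝ} {m N : ℕ} (hβ : 0 < β) (hε : 0 < ε) (hε1 : ε ≤ 1)
    (ha : 0 < a) (ha1 : a ≤ 1) (hα : 7 * a ≤ α) (hN : 0 < N) (hNa : 1 / (N : ℝ) ≤ a / 4)
    (hcb : c = 0 → b ≠ 0)
    (hm : c ≠ 0 → 0 < m ∧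
      (2 * (N + 1) : ℝ) * ((2 ^ c + 1) * (2 * Real.exp (-(m * ((a / 4) ^ 2 / 4))))) ≤ β / 3 ∧
      (2 ^ c * (N + 1) : ℝ) * Real.exp (-(ε / 4 * (m * (a / 4)))) ≤ β / 3)
    (hn : b ≠ 0 → 0 < n ∧
      (b + 1 : ℝ) * (2 * Real.exp (-(n * (a ^ 2 / (4 * ((b + 1) / (ε / 4) + 1) ^ 2))))) ≤ β / 3) :
    ∃ (S T0 : Type) (Ti : Fin n → Type) (seedD : PMF S)
      (Cur : (Fin m → ((Fin c → Bool) × (Fin b → Bool)) × Bool) → PMF T0)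
      (R : ∀ i : Fin n, S → ((Fin c → Bool) × (Fin b → Bool)) × Bool → PMF (Ti i))
      (ref : S → T0 → (∀ i, Ti i) → PMF ((Fin c → Bool) × (Fin b → Bool) → Bool)),
      DPAlg ε Cur ∧
      (∀ i s, DPRand ε (R i s)) ∧
      (∀ (k : Fin c → Bool) (t : Fin b → Bool)
          (D : PMF ((Fin c → Bool) × (Fin b → Bool))),
        ENNReal.ofReal (1 - β) ≤
          prOf (seedD.bind fun s =>
                 (iid D m).bind fun xs =>
                 (iid D n).bind fun ys =>
                 (Cur (fun i => (xs i, xor (Par k (xs i).1) (Thr t (xs i).2)))).bind fun t0 =>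
                 (pmfPi n (fun i =>
                     R i s (ys i, xor (Par k (ys i).1) (Thr t (ys i).2)))).bind fun ms =>
                 ref s t0 ms)
            {h | errD D (fun p => xor (Par k p.1) (Thr t p.2)) h ≤ ENNReal.ofReal α}) := by
  have hγ0 : 0 < ε / 4 := by positivity
  have hγ1 : ε / 4 ≤ 1 := by linarith
  refine ⟨Unit, (Fin c → Bool) × Fin (N + 1), fun _ => UserMsg b, PMF.pure (),
    fun S => gibbs (ε / 4) (levelCost N S), fun _ _ => signRandomizer (ε / 4) hγ0.le hγ1 userNode,
    fun _ o ms => PMF.pure (refereeHyp (ε / 4) a N o ms), dpAlg_gibbs_levelCost hε.le N,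
    fun _ _ => dpRand_signRandomizer hγ0.le hγ1 (by nlinarith) userNode, fun k t D => ?_⟩
  have ht := bitsToNat_lt t
  set f : (Fin c → Bool) × (Fin b → Bool) → Bool := parityThresh k (bitsToNat t) with hf
  change ENNReal.ofReal (1 - β) ≤ prOf ((PMF.pure ()).bind fun _ => (iid D m).bind fun xs =>
    (iid D n).bind fun ys => (gibbs (ε / 4) (levelCost N fun i => (xs i, f (xs i)))).bind fun o =>
    (pmfPi n fun i => signRandomizer (ε / 4) hγ0.le hγ1 userNode (ys i, f (ys i))).bind fun ms =>
      PMF.pure (refereeHyp (ε / 4) a N o ms)) {h | errD D f h ≤ ENNReal.ofReal α}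
  rw [PMF.pure_bind]
  refine le_prOf_of_compl_le _ _ hβ.le ?_
  set e : ℝ := 2 * Real.exp (-(n * (a ^ 2 / (4 * ((b + 1) / (ε / 4) + 1) ^ 2)))) with he
  have he0 : 0 ≤ e := by positivity
  have hβ3 : 0 ≤ β / 3 := by positivity
  have hbe : (0 : ℝ) + b * e ≤ β / 3 := by
    by_cases hb : b = 0
    · simp [hb, hβ3]
    · linarith [(hn hb).2]
  by_cases hc : c = 0
  · have hb := hcb hc
    have hn' : (0 : ℝ) < n := by exact_mod_cast (hn hb).1
    have : IsEmpty (Fin c) := by rw [hc]; infer_instance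
    rw [← zero_add (ENNReal.ofReal β)]
    refine prOf_bind_le _ _ _ ∅ _ _ (by simp [prOf]) fun xs _ => ?_
    rw [PMF.bind_comm, ← zero_add (ENNReal.ofReal β)]
    refine prOf_bind_le _ _ _ ∅ _ _ (by simp [prOf]) fun o _ => ?_
    have hmean : pmfMean (msgLaw hγ0 hγ1 D f) (labelEstimate (ε / 4)) =
        cdfBelow D (bitsToNat t) := by
      rw [msgLaw, pmfMean_bind]
      refine congrArg _ (funext fun z => (pmfMean_labelEstimate hγ0 hγ1 (z, f z)).trans ?_)
      by_cases hz : bitsToNat t ≤ bitsToNat z.2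
      · simp [hf, parityThresh, par_of_isEmpty, belowInd, hz, not_lt.mpr hz]
      · simp [hf, parityThresh, par_of_isEmpty, belowInd, hz, not_le.mp hz]
    have hlab := prOf_iid_msgLaw_le hγ0 hγ1 D f
      (fun w => abs_signEstimate_le hγ0 abs_labelCoeff_le _ w) n hmean ha ha1
    have herr : disMean D f o.1 (bitsToNat t) ≤ 2 * a := by
      have h0 : disMean D f o.1 (bitsToNat t) = pmfMean D fun _ => 0 := by
        refine congrArg _ (funext fun z => ?_)
        simp [disInd, hf, parityThresh, par_of_isEmpty]
      rw [h0, pmfMean_const]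
      positivity
    refine (prOf_refereeHyp_le hγ0 hγ1 D f o (fun h => (hn h).1) ht ha ha1 hα herr _ he0 hlab
      fun ms hms => ?_).trans (ENNReal.ofReal_le_ofReal ?_)
    · rw [Set.mem_ofPred_eq, not_le] at hms
      have e1 : (∑ i, labelEstimate (ε / 4) (ms i)) / n - cdfBelow D (bitsToNat t) =
          (∑ i, labelEstimate (ε / 4) (ms i) - n * cdfBelow D (bitsToNat t)) / n := by field_simp
      rw [targetLevel, if_pos hc, e1, abs_div, abs_of_pos hn', div_le_iff₀ hn', mul_comm a]
      exact hms.le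
    · rw [← he]
      linarith [(hn hb).2]
  · obtain ⟨hm0, hm1, hm2⟩ := hm hc
    obtain ⟨G, hGcard, hG⟩ :=
      exists_bracketing (cdfBelow_nonneg D) (cdfBelow_le_one D) (2 ^ b) hN
    rw [show β = β / 3 + (β / 3 + β / 3) by ring, ENNReal.ofReal_add hβ3 (by positivity)]
    refine prOf_bind_le _ _ _ (badSamples D f G (a / 4) m) _ _ ?_ fun xs hxs => ?_
    · refine (prOf_badSamples_le D f G (by positivity) (by linarith) m).trans
        (ENNReal.ofReal_le_ofReal (le_trans ?_ hm1))
      have : (G.card : ℝ) ≤ 2 * (N + 1) := by exact_mod_cast hGcard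
      gcongr
    rw [PMF.bind_comm, ENNReal.ofReal_add hβ3 hβ3]
    obtain ⟨j, hj⟩ := exists_levelCost_le hN k ht hm0 xs
    refine prOf_bind_le _ _ _ _ _ _ ((prOf_gibbs_cost_gt_le hγ0.le _ (k, j) (m * (a / 4))).trans
      (ENNReal.ofReal_le_ofReal (le_trans (le_of_eq ?_) hm2))) fun o ho => ?_
    · simp
    rw [Set.mem_ofPred_eq, not_lt] at ho
    have hmN : m * (1 / N : ℝ) ≤ m * (a / 4) := by gcongr
    obtain ⟨s, hs, herr, hlev⟩ := exists_threshold_of_levelCost_le D f hNa hm0 hG hxs o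
      (by linarith)
    refine (prOf_refereeHyp_le hγ0 hγ1 D f o (fun h => (hn h).1) hs ha ha1 hα herr ∅ le_rfl
      (by simp [prOf]) fun ms _ => ?_).trans (ENNReal.ofReal_le_ofReal hbe)
    rw [targetLevel, if_neg hc]
    exact hlev

end Protocol

/-! ### Sample sizes -/

lemma half_le_floor {x : ℝ} (hx : 2 ≤ x) : x / 2 ≤ ⌊x⌋₊ := by
  linarith [Nat.lt_floor_add_one x]

lemma mul_exp_neg_le {α β : ℝ} {c : ℕ} (hα : 0 < α) (hβ : 0 < β) (h : α * β ≤ 1 / 2)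
    (hc : 1 ≤ c) {x : ℝ} (hx : 12 * (c * Real.log (1 / (α * β))) ≤ x) :
    816 * 2 ^ c / α * Real.exp (-x) ≤ β := by
  have hq : 0 < α * β := by positivity
  have hlog : Real.log (1 / (α * β)) = -Real.log (α * β) := by rw [one_div, Real.log_inv]
  have hlogneg : Real.log (α * β) ≤ 0 := Real.log_nonpos hq.le (by linarith)
  have hc' : (1 : ℝ) ≤ c := by exact_mod_cast hc
  have h1 : Real.exp (-x) ≤ (α * β) ^ (10 + c + 1) := by
    rw [← Real.exp_log (pow_pos hq _), Real.exp_le_exp, Real.log_pow]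
    push_cast
    rw [hlog] at hx
    nlinarith
  have h2 : (α * β) ^ (10 + c + 1) ≤ (1 / 2) ^ (10 + c) * (α * β) := by
    rw [pow_succ]
    gcongr
  calc 816 * 2 ^ c / α * Real.exp (-x)
      ≤ 816 * 2 ^ c / α * ((1 / 2) ^ (10 + c) * (α * β)) := by
        gcongr
        exact h1.trans h2
    _ = 816 / 1024 * β := by
        rw [pow_add, one_div_pow 2 c]
        field_simp
        norm_num
    _ ≤ β := by linarith

lemma mul_exp_neg_le' {α β ε : ℝ} {b : ℕ} (hα : 0 < α) (hα1 : α ≤ 1) (hβ : 0 < β) (hε : 0 < ε)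
    (hε1 : ε ≤ 1) (h : α * β ≤ 1 / 2) (hb : 1 ≤ b) {x : ℝ}
    (hx : 5 * Real.log (b / (α * β * ε)) ≤ x) : 12 * b * Real.exp (-x) ≤ β := by
  have hb' : (1 : ℝ) ≤ b := by exact_mod_cast hb
  set q : ℝ := α * β * ε / b with hq
  have hq0 : 0 < q := by positivity
  have hq1 : q ≤ 1 / 2 := by
    rw [hq, div_le_iff₀ (by positivity)]
    nlinarith [mul_pos hα hβ]
  have hq2 : q * b ≤ β := by
    rw [hq, div_mul_cancel₀ _ (by positivity)]
    nlinarith [mul_pos hβ hε, mul_pos hα hβ]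
  have hlog : Real.log (b / (α * β * ε)) = -Real.log q := by
    rw [hq, ← Real.log_inv, inv_div]
  have h1 : Real.exp (-x) ≤ q ^ (4 + 1) := by
    rw [← Real.exp_log (pow_pos hq0 _), Real.exp_le_exp, Real.log_pow]
    push_cast
    rw [hlog] at hx
    linarith
  have h2 : q ^ (4 + 1) ≤ (1 / 2) ^ 4 * q := by
    rw [pow_succ]
    gcongr
  calc 12 * b * Real.exp (-x) ≤ 12 * b * ((1 / 2) ^ 4 * q) := by
        gcongr
        exact h1.trans h2
    _ = 12 / 16 * (q * b) := by ring
    _ ≤ β := by nlinarith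

lemma half_le_log_inv {q : ℝ} (h₀ : 0 < q) (h : q ≤ 1 / 2) : 1 / 2 ≤ Real.log (1 / q) := by
  have h1 : Real.log 2 ≤ Real.log (1 / q) :=
    Real.log_le_log two_pos (by rw [le_div_iff₀ h₀]; linarith)
  linarith [Real.log_two_gt_d9]

lemma curator_size_bounds {α β ε : ℝ} {c m N : ℕ} (hα : 0 < α) (hα1 : α ≤ 1) (hβ : 0 < β)
    (hε : 0 < ε) (hε1 : ε ≤ 1) (h : α * β ≤ 1 / 2) (hc : c ≠ 0) (hN : (N : ℝ) + 1 ≤ 34 / α)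
    (hm : m = ⌊10 ^ 6 * ((c : ℝ) / (α ^ 4 * ε)) * Real.log (1 / (α * β))⌋₊) :
    0 < m ∧
      (2 * (N + 1) : ℝ) * ((2 ^ c + 1) *
        (2 * Real.exp (-(m * ((α / 8 / 4) ^ 2 / 4))))) ≤ β / 3 ∧
      (2 ^ c * (N + 1) : ℝ) * Real.exp (-(ε / 4 * (m * (α / 8 / 4)))) ≤ β / 3 := by
  have hc1 : 1 ≤ c := Nat.one_le_iff_ne_zero.mpr hc
  have hc' : (1 : ℝ) ≤ c := by exact_mod_cast hc1
  set l := Real.log (1 / (α * β)) with hl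
  have hl2 : 1 / 2 ≤ l := half_le_log_inv (by positivity) h
  have hcl : 1 / 2 ≤ c * l := by nlinarith
  have hd : α ^ 4 * ε ≤ 1 := mul_le_one₀ (pow_le_one₀ hα.le hα1) hε.le hε1
  have hx : 10 ^ 6 * ((c : ℝ) / (α ^ 4 * ε)) * l = 10 ^ 6 * (c * l) / (α ^ 4 * ε) := by ring
  have hfloor : 10 ^ 6 * (c * l) / (α ^ 4 * ε) / 2 ≤ m := by
    rw [hm, hx]
    refine half_le_floor ?_
    rw [le_div_iff₀ (by positivity)]
    linarith
  have hmul : 500000 * (c * l) ≤ m * (α ^ 4 * ε) := by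
    rw [div_div, div_le_iff₀ (by positivity)] at hfloor
    linarith
  have hm0 : (0 : ℝ) < m := lt_of_lt_of_le (by positivity) hfloor
  have hα2 : α ^ 4 * ε ≤ α ^ 2 := by
    have : α ^ 2 * ε ≤ 1 := mul_le_one₀ (pow_le_one₀ hα.le hα1) hε.le hε1
    nlinarith [pow_pos hα 2]
  have hα3 : α ^ 4 * ε ≤ ε * α := by
    have : α ^ 3 ≤ 1 := pow_le_one₀ hα.le hα1
    nlinarith [mul_pos hα hε]
  have hs : 12 * (c * l) ≤ m * ((α / 8 / 4) ^ 2 / 4) := by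
    have := mul_le_mul_of_nonneg_left hα2 hm0.le
    linarith
  have hg : 12 * (c * l) ≤ ε / 4 * (m * (α / 8 / 4)) := by
    have := mul_le_mul_of_nonneg_left hα3 hm0.le
    linarith
  have hs' := mul_exp_neg_le hα hβ h hc1 hs
  have hg' := mul_exp_neg_le hα hβ h hc1 hg
  have h2c : (1 : ℝ) ≤ 2 ^ c := one_le_pow₀ one_le_two
  refine ⟨by exact_mod_cast hm0, ?_, ?_⟩
  · calc _ ≤ (2 * (34 / α)) * ((2 ^ c + 2 ^ c) *
          (2 * Real.exp (-(m * ((α / 8 / 4) ^ 2 / 4))))) := by gcongr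
      _ = 816 * 2 ^ c / α * Real.exp (-(m * ((α / 8 / 4) ^ 2 / 4))) / 3 := by ring
      _ ≤ β / 3 := by gcongr
  · calc _ ≤ 2 ^ c * (34 / α) * Real.exp (-(ε / 4 * (m * (α / 8 / 4)))) := by gcongr
      _ ≤ 816 * 2 ^ c / α * Real.exp (-(ε / 4 * (m * (α / 8 / 4)))) / 3 := by
        have : 0 < 2 ^ c / α * Real.exp (-(ε / 4 * (m * (α / 8 / 4)))) := by positivity
        linarith [this, show 816 * 2 ^ c / α * Real.exp (-(ε / 4 * (m * (α / 8 / 4)))) / 3 =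
          272 * (2 ^ c / α * Real.exp (-(ε / 4 * (m * (α / 8 / 4))))) by ring,
          show 2 ^ c * (34 / α) * Real.exp (-(ε / 4 * (m * (α / 8 / 4)))) =
          34 * (2 ^ c / α * Real.exp (-(ε / 4 * (m * (α / 8 / 4))))) by ring]
      _ ≤ β / 3 := by gcongr

lemma local_size_bounds {α β ε : ℝ} {b n : ℕ} (hα : 0 < α) (hα1 : α ≤ 1) (hβ : 0 < β)
    (hε : 0 < ε) (hε1 : ε ≤ 1) (h : α * β ≤ 1 / 2) (hb : b ≠ 0)
    (hn : n = ⌊10 ^ 6 * ((b : ℝ) ^ 3 / (α ^ 4 * ε ^ 2)) * Real.log (b / (α * β * ε))⌋₊) :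
    0 < n ∧
      (b + 1 : ℝ) * (2 * Real.exp
        (-(n * ((α / 8) ^ 2 / (4 * ((b + 1) / (ε / 4) + 1) ^ 2))))) ≤ β / 3 := by
  have hb1 : 1 ≤ b := Nat.one_le_iff_ne_zero.mpr hb
  have hb' : (1 : ℝ) ≤ b := by exact_mod_cast hb1
  have hb0 : (0 : ℝ) < b := by linarith
  set l := Real.log (b / (α * β * ε)) with hl
  have hl2 : 1 / 2 ≤ l := by
    rw [hl, ← one_div_div (α * β * ε)]
    refine half_le_log_inv (by positivity) ?_
    rw [div_le_iff₀ hb0]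
    nlinarith [mul_pos hα hβ]
  have hd : α ^ 4 * ε ^ 2 ≤ 1 :=
    mul_le_one₀ (pow_le_one₀ hα.le hα1) (by positivity) (pow_le_one₀ hε.le hε1)
  have hb3 : (1 : ℝ) ≤ b ^ 3 := one_le_pow₀ hb'
  have hbl : 1 / 2 ≤ b ^ 3 * l := by nlinarith
  have hx : 10 ^ 6 * ((b : ℝ) ^ 3 / (α ^ 4 * ε ^ 2)) * l =
      10 ^ 6 * (b ^ 3 * l) / (α ^ 4 * ε ^ 2) := by ring
  have hfloor : 10 ^ 6 * (b ^ 3 * l) / (α ^ 4 * ε ^ 2) / 2 ≤ n := by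
    rw [hn, hx]
    refine half_le_floor ?_
    rw [le_div_iff₀ (by positivity)]
    linarith
  have hmul : 500000 * (b ^ 3 * l) ≤ n * (α ^ 4 * ε ^ 2) := by
    rw [div_div, div_le_iff₀ (by positivity)] at hfloor
    linarith
  have hn0 : (0 : ℝ) < n := lt_of_lt_of_le (by positivity) hfloor
  have hB : (b + 1) / (ε / 4) + 1 ≤ 9 * b / ε := by
    rw [div_add_one (by positivity), div_le_div_iff₀ (by positivity) hε]
    nlinarith [mul_pos hε hb0]
  have hα2 : α ^ 4 * ε ^ 2 ≤ α ^ 2 * ε ^ 2 := by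
    gcongr ?_ * _
    exact pow_le_pow_of_le_one hα.le hα1 (by norm_num)
  have hs : 5 * l ≤ n * ((α / 8) ^ 2 / (4 * ((b + 1) / (ε / 4) + 1) ^ 2)) := by
    calc 5 * l ≤ n * ((α / 8) ^ 2 / (4 * (9 * b / ε) ^ 2)) := by
          rw [show n * ((α / 8) ^ 2 / (4 * (9 * b / ε) ^ 2)) =
            n * (α ^ 2 * ε ^ 2) / (20736 * b ^ 2) by field_simp; norm_num,
            le_div_iff₀ (by positivity)]
          have h1 := mul_le_mul_of_nonneg_left hα2 hn0.le
          have h2 : (b : ℝ) ^ 2 * l ≤ b ^ 3 * l := by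
            gcongr ?_ * _
            exact pow_le_pow_right₀ hb' (by norm_num)
          linarith
      _ ≤ _ := by gcongr
  have hs' := mul_exp_neg_le' hα hα1 hβ hε hε1 h hb1 hs
  refine ⟨by exact_mod_cast hn0, ?_⟩
  calc _ ≤ (b + b : ℝ) * (2 * Real.exp
        (-(n * ((α / 8) ^ 2 / (4 * ((b + 1) / (ε / 4) + 1) ^ 2))))) := by gcongr
    _ = 12 * b * Real.exp (-(n * ((α / 8) ^ 2 / (4 * ((b + 1) / (ε / 4) + 1) ^ 2)))) / 3 := by
      ring
    _ ≤ β / 3 := by gcongr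

/-! ### Degenerate parameters -/

lemma dpAlg_const {X Y : Type*} {m : ℕ} {ε : ℝ} (hε : 0 ≤ ε) (P : PMF Y) :
    DPAlg ε (fun _ : Fin m → X => P) := fun _ _ _ T =>
  le_mul_of_one_le_left zero_le (by simpa using hε)

/-- A uniformly random constant errs with probability at most `1 / 2` half of the time. -/
lemma half_le_prOf_const_errD_le {Z : Type*} (D : PMF Z) (f : Z → Bool) {α : ℝ}
    (hα : 1 / 2 ≤ α) :
    (1 / 2 : ℝ≥0∞) ≤ prOf ((PMF.uniformOfFintype Bool).bind fun s => PMF.pure fun _ : Z => s)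
      {h | errD D f h ≤ ENNReal.ofReal α} := by
  obtain ⟨s, hs⟩ : ∃ s : Bool, errD D f (fun _ => s) ≤ ENNReal.ofReal α := by
    by_contra! hcon
    have hadd : errD D f (fun _ => true) + errD D f (fun _ => false) = 1 := by
      simp only [errD, prOf, PMF.toOuterMeasure_apply]
      rw [← ENNReal.tsum_add, ← D.tsum_coe]
      refine tsum_congr fun z => ?_
      cases h : f z <;> simp [Set.indicator, h]
    have h2 : (1 : ℝ≥0∞) ≤ ENNReal.ofReal α + ENNReal.ofReal α := by
      rw [← ENNReal.ofReal_add (by linarith) (by linarith), ENNReal.one_le_ofReal]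
      linarith
    exact absurd ((ENNReal.add_lt_add (hcon true) (hcon false)).trans_eq hadd) (not_lt.mpr h2)
  rw [prOf_bind]
  refine le_trans (le_of_eq ?_) (ENNReal.le_tsum s)
  rw [prOf, PMF.toOuterMeasure_pure_apply, if_pos]
  · simp
  · exact hs

lemma log_inv_mul_nonneg {α β : ℝ} (hα : 0 < α) (hα1 : α ≤ 1) (hβ : 0 < β) (hβ1 : β ≤ 1) :
    0 ≤ Real.log (1 / (α * β)) :=
  Real.log_nonneg (by rw [le_div_iff₀ (by positivity), one_mul]; exact mul_le_one₀ hα1 hβ.le hβ1)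

lemma log_natCast_div_nonneg {α β ε : ℝ} (hα : 0 < α) (hα1 : α ≤ 1) (hβ : 0 < β) (hβ1 : β ≤ 1)
    (hε : 0 < ε) (hε1 : ε ≤ 1) (b : ℕ) : 0 ≤ Real.log ((b : ℝ) / (α * β * ε)) := by
  rcases Nat.eq_zero_or_pos b with rfl | hb
  · simp
  · refine Real.log_nonneg ?_
    rw [le_div_iff₀ (by positivity), one_mul]
    exact (mul_le_one₀ (mul_le_one₀ hα1 hβ.le hβ1) hε.le hε1).trans (by exact_mod_cast hb)

/-- there is a constant `C > 0` such that for all `α, β, ε ∈ (0,1]` and `b, c`,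
there are `m ≤ C·(c/(α⁴ε))·log(1/(αβ))` and `n ≤ C·(b³/(α⁴ε²))·log(b/(αβε))` and a
non-interactive `ε`-DP protocol in the `(m,n)`-hybrid model (a curator mechanism on `m` labeled
examples, `n` local randomizers on one labeled example each — possibly sharing a public random
string, with privacy for every fixed value of that string — and a referee map) that
`(α,β)`-PAC learns `ParityThresh_{b,c}`. -/
theorem stmt_4 : ∃ C : ℝ, 0 < C ∧
    ∀ (α β ε : ℝ), 0 < α → α ≤ 1 → 0 < β → β ≤ 1 → 0 < ε → ε ≤ 1 →
    ∀ b c : ℕ, ∃ m n : ℕ,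
      (m : ℝ) ≤ C * ((c : ℝ) / (α ^ 4 * ε)) * Real.log (1 / (α * β)) ∧
      (n : ℝ) ≤ C * ((b : ℝ) ^ 3 / (α ^ 4 * ε ^ 2)) * Real.log ((b : ℝ) / (α * β * ε)) ∧
      ∃ (S T0 : Type) (Ti : Fin n → Type) (seedD : PMF S)
        (Cur : (Fin m → ((Fin c → Bool) × (Fin b → Bool)) × Bool) → PMF T0)
        (R : ∀ i : Fin n, S → ((Fin c → Bool) × (Fin b → Bool)) × Bool → PMF (Ti i))
        (ref : S → T0 → (∀ i, Ti i) → PMF ((Fin c → Bool) × (Fin b → Bool) → Bool)),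
        DPAlg ε Cur ∧
        (∀ i s, DPRand ε (R i s)) ∧
        (∀ (k : Fin c → Bool) (t : Fin b → Bool)
            (D : PMF ((Fin c → Bool) × (Fin b → Bool))),
          ENNReal.ofReal (1 - β) ≤
            prOf (seedD.bind fun s =>
                   (iid D m).bind fun xs =>
                   (iid D n).bind fun ys =>
                   (Cur (fun i => (xs i, xor (Par k (xs i).1) (Thr t (xs i).2)))).bind fun t0 =>
                   (pmfPi n (fun i =>
                       R i s (ys i, xor (Par k (ys i).1) (Thr t (ys i).2)))).bind fun ms =>
                   ref s t0 ms)
              {h | errD D (fun p => xor (Par k p.1) (Thr t p.2)) h ≤ ENNReal.ofReal α}) := by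
  refine ⟨10 ^ 6, by norm_num, fun α β ε hα hα1 hβ hβ1 hε hε1 b c => ?_⟩
  have hlm := log_inv_mul_nonneg hα hα1 hβ hβ1
  have hln := log_natCast_div_nonneg hα hα1 hβ hβ1 hε hε1 b
  rcases lt_or_ge (1 / 2) (α * β) with hαβ | hαβ
  · have hα2 : 1 / 2 ≤ α := by nlinarith
    have hβ2 : 1 / 2 ≤ β := by nlinarith
    refine ⟨0, 0, by rw [Nat.cast_zero]; positivity, by rw [Nat.cast_zero]; positivity, Bool, Unit,
      fun _ => Unit, PMF.uniformOfFintype Bool, fun _ => PMF.pure (), fun i => i.elim0,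
      fun s _ _ => PMF.pure fun _ => s, dpAlg_const hε.le _, fun i => i.elim0, fun k t D => ?_⟩
    simp only [PMF.bind_const]
    refine le_trans ?_ (half_le_prOf_const_errD_le D _ hα2)
    rw [ENNReal.ofReal_le_iff_le_toReal (by simp)]
    norm_num
    linarith
  by_cases hcb : c = 0 ∧ b = 0
  · obtain ⟨rfl, rfl⟩ := hcb
    refine ⟨0, 0, by simp, by simp, Unit, Unit, fun _ => Unit, PMF.pure (), fun _ => PMF.pure (),
      fun i => i.elim0, fun _ _ _ => PMF.pure fun _ => true, dpAlg_const hε.le _,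
      fun i => i.elim0, fun k t D => ?_⟩
    simp only [PMF.bind_const]
    rw [prOf, PMF.toOuterMeasure_pure_apply, if_pos]
    · simpa using hβ.le
    · simp [errD, prOf, par_of_isEmpty, Thr, bitsToNat]
  have hN0 : 0 < ⌈32 / α⌉₊ := Nat.ceil_pos.mpr (by positivity)
  have hN1 : (⌈32 / α⌉₊ : ℝ) + 1 ≤ 34 / α := by
    have h1 := Nat.ceil_lt_add_one (show 0 ≤ 32 / α by positivity)
    have h2 : 1 ≤ 1 / α := by rwa [le_div_iff₀ hα, one_mul]
    linarith [show 34 / α = 32 / α + 2 * (1 / α) by ring]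
  have hN2 : 1 / (⌈32 / α⌉₊ : ℝ) ≤ α / 8 / 4 := by
    rw [show α / 8 / 4 = 1 / (32 / α) by field_simp; norm_num]
    exact one_div_le_one_div_of_le (by positivity) (Nat.le_ceil _)
  exact ⟨_, _, Nat.floor_le (by positivity), Nat.floor_le (by positivity),
    exists_hybrid_protocol hβ hε hε1 (by positivity) (by linarith) (by linarith) hN0 hN2
      (fun hc hb => hcb ⟨hc, hb⟩)
      (fun hc => curator_size_bounds hα hα1 hβ hε hε1 hαβ hc hN1 rfl)
      (fun hb => local_size_bounds hα hα1 hβ hε hε1 hαβ hb rfl)⟩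
end

section
/- There is a constant C > 0 such that the following holds for all c, d, m, n ∈ ℕ with m < n and all ε > 0. If there exists an ε-differentially private protocol for the 1-out-of-2^d-parity task with string length c in the (m,n)-hybrid model, succeeding with probability at least 3/4 on every instance, with the curator-first-then-one-local-round communication pattern, then n ≥ C·c·2^d/(d·ε). -/
open scoped ENNReal

/-- A data point of the 1-out-of-`2^d`-parity task: either `(x, (⟨x,r_j⟩)_j)` or `(t, s_t)`. -/
abbrev ParPoint (c d m : ℕ) : Type :=
  ((Fin c → Bool) × ((Fin d → Bool) → Bool)) ⊕ (Fin (m + 1) × (Fin d → Bool))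

/-- The secret index `s = s_1 ⊕ ⋯ ⊕ s_{m+1}` determined by the shares. -/
def sOf {d m : ℕ} (sh : Fin (m + 1) → Fin d → Bool) : Fin d → Bool :=
  fun j => xorFold fun t => sh t j

/-- The data-point distribution of the 1-out-of-`2^d`-parity task. -/
noncomputable def oneOutDist (c d m : ℕ) (r : (Fin d → Bool) → Fin c → Bool)
    (sh : Fin (m + 1) → Fin d → Bool) : PMF (ParPoint c d m) :=
  (PMF.uniformOfFintype Bool).bind fun flip =>
    if flip then
      (PMF.uniformOfFintype (Fin c → Bool)).map fun x => Sum.inl (x, fun j => Par (r j) x)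
    else
      (PMF.uniformOfFintype (Fin (m + 1))).map fun t => Sum.inr (t, sh t)

/-! ### Generalities on PMFs -/

theorem mul_sum_bind_apply_le {A B I : Type*} (s : Finset I) (p : PMF A) (f : I → A → PMF B)
    (y : I → B) (κ M : ℝ≥0∞) (h : ∀ a, κ * ∑ i ∈ s, f i a (y i) ≤ M) :
    κ * ∑ i ∈ s, (p.bind (f i)) (y i) ≤ M := by
  simp only [PMF.bind_apply]
  rw [← Summable.tsum_finsetSum (fun _ _ => ENNReal.summable), ← ENNReal.tsum_mul_left]
  calc ∑' a, κ * ∑ i ∈ s, p a * f i a (y i) ≤ ∑' a, p a * M := by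
        refine ENNReal.tsum_le_tsum fun a => ?_
        rw [← Finset.mul_sum, mul_left_comm]
        gcongr
        exact h a
    _ = M := by rw [ENNReal.tsum_mul_right, p.tsum_coe, one_mul]

theorem iid_map {A B : Type*} (D : PMF A) (f : A → B) (m : ℕ) :
    iid (D.map f) m = (iid D m).map (fun u i => f (u i)) := by
  induction m with
  | zero =>
    simp only [iid, PMF.pure_map]
    congr 1
    funext i
    exact i.elim0
  | succ m ih =>
    rw [iid, ih]
    simp only [iid, PMF.map, PMF.bind_bind, PMF.pure_bind, Function.comp_def]
    congr 1; funext u; congr 1; funext z; congr 1; funext i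
    refine Fin.cases ?_ (fun j => ?_) i <;> simp

theorem pmfPi_bind (n : ℕ) {A B : Fin n → Type} (P : ∀ i, PMF (A i))
    (k : ∀ i, A i → PMF (B i)) :
    pmfPi n (fun i => (P i).bind (k i)) = (pmfPi n P).bind fun a => pmfPi n fun i => k i (a i) := by
  induction n with
  | zero => simp [pmfPi]
  | succ n ih =>
    simp only [pmfPi, ih, PMF.bind_bind, PMF.pure_bind, Fin.cons_zero, Fin.cons_succ]
    congr 1; funext a
    rw [PMF.bind_comm]

theorem pmfPi_succ_apply {n : ℕ} {A : Fin (n + 1) → Type} (P : ∀ i, PMF (A i))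
    (a : ∀ i, A i) :
    pmfPi (n + 1) P a = P 0 (a 0) * pmfPi n (fun i => P i.succ) (fun i => a i.succ) := by
  classical
  simp only [pmfPi, PMF.bind_apply, PMF.pure_apply]
  rw [tsum_eq_single (a 0), tsum_eq_single (Fin.tail a)]
  · rw [if_pos (Fin.cons_self_tail a).symm, mul_one]
    rfl
  · intro b hb
    rw [if_neg, mul_zero]
    intro h
    exact hb (by rw [h, Fin.tail_cons])
  · intro b hb
    rw [ENNReal.tsum_eq_zero.2, mul_zero]
    intro t
    rw [if_neg, mul_zero]
    intro h
    exact hb (by rw [h, Fin.cons_zero])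

theorem pmfPi_apply_le (n : ℕ) {A : Fin n → Type} (P P' : ∀ i, PMF (A i)) (M : ℝ≥0∞)
    (h : ∀ i a, P i a ≤ M * P' i a) (a : ∀ i, A i) :
    pmfPi n P a ≤ M ^ n * pmfPi n P' a := by
  induction n with
  | zero => simp only [pmfPi, pow_zero, one_mul, le_refl]
  | succ n ih =>
    rw [pmfPi_succ_apply, pmfPi_succ_apply]
    calc _ ≤ (M * P' 0 (a 0)) * (M ^ n * pmfPi n (fun i => P' i.succ) (fun i => a i.succ)) :=
          mul_le_mul' (h 0 _) (ih _ _ (fun i => h i.succ) _)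
      _ = _ := by ring

theorem bind_map_prodMk_apply {A B : Type*} (p : PMF A) (q : A → PMF B) (w : A × B) :
    (p.bind fun a => (q a).map (Prod.mk a)) w = p w.1 * q w.1 w.2 := by
  classical
  obtain ⟨a, b⟩ := w
  simp only [PMF.bind_apply, PMF.map_apply]
  rw [tsum_eq_single a, tsum_eq_single b]
  · simp
  · intro b' hb
    rw [if_neg]
    intro h
    exact hb (Prod.ext_iff.1 h).2.symm
  · intro a' ha
    rw [ENNReal.tsum_eq_zero.2, mul_zero]
    intro t
    rw [if_neg]
    intro h
    exact ha (Prod.ext_iff.1 h).1.symm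

/-! ### Consequences of differential privacy -/

theorem DPRand.apply_le {X Y : Type*} {ε : ℝ} {R : X → PMF Y} (h : DPRand ε R) (x x' : X)
    (y : Y) : R x y ≤ ENNReal.ofReal (Real.exp ε) * R x' y := by
  simpa only [prOf, PMF.toOuterMeasure_apply_singleton] using h x x' {y}

theorem DPAlg.apply_le {X Y : Type*} {m : ℕ} {ε : ℝ} {A : (Fin m → X) → PMF Y}
    (h : DPAlg ε A) (x x' : Fin m → X) (y : Y) :
    A x y ≤ ENNReal.ofReal (Real.exp ε) ^ m * A x' y := by
  have key : ∀ k : ℕ, k ≤ m →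
      A x y ≤ ENNReal.ofReal (Real.exp ε) ^ k * A (fun i => if (i : ℕ) < k then x' i else x i) y := by
    intro k
    induction k with
    | zero => simp
    | succ k ih =>
      intro hk
      refine (ih (by omega)).trans ?_
      rw [pow_succ, mul_assoc]
      gcongr
      have hN : Neighbor (fun i : Fin m => if (i : ℕ) < k then x' i else x i)
          (fun i => if (i : ℕ) < k + 1 then x' i else x i) := by
        refine ⟨⟨k, hk⟩, fun j hj => ?_⟩
        have : (j : ℕ) ≠ k := fun h => hj (Fin.ext h)
        have h2 : (j : ℕ) < k ↔ (j : ℕ) < k + 1 := by omega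
        simp only [h2]
      simpa only [prOf, PMF.toOuterMeasure_apply_singleton] using h _ _ hN {y}
  simpa using key m le_rfl

/-! ### A random access code bound for messages of bounded likelihood ratio -/

theorem sum_exp_sum_le {I A : Type*} [Fintype I] [DecidableEq I] [Fintype A] (g : I → A → ℝ)
    (h0 : ∀ i a, 0 ≤ g i a) (h1 : ∀ i, ∑ a, g i a = 1) (l : ℝ) :
    ∑ r : I → A, Real.exp (l * ∑ i, g i (r i)) ≤
      ((Fintype.card A : ℝ) + (Real.exp l - 1)) ^ Fintype.card I := by
  have hle : ∀ i a, g i a ≤ 1 := fun i a =>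
    (h1 i) ▸ Finset.single_le_sum (fun b _ => h0 i b) (Finset.mem_univ a)
  have hconv : ∀ p : ℝ, 0 ≤ p → p ≤ 1 → Real.exp (l * p) ≤ 1 + p * (Real.exp l - 1) := by
    intro p hp hp1
    have := convexOn_exp.2 (Set.mem_univ 0) (Set.mem_univ l) (sub_nonneg.2 hp1) hp (by ring)
    simp only [smul_eq_mul, mul_zero, zero_add, Real.exp_zero, mul_one] at this
    rw [mul_comm l p]
    linarith
  calc ∑ r : I → A, Real.exp (l * ∑ i, g i (r i))
      = ∑ r : I → A, ∏ i, Real.exp (l * g i (r i)) := by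
        simp only [Finset.mul_sum, Real.exp_sum]
    _ = ∏ i, ∑ a, Real.exp (l * g i a) := 
        (Fintype.prod_sum (κ := fun _ => A) fun i a => Real.exp (l * g i a)).symm
    _ ≤ ∏ _i : I, ((Fintype.card A : ℝ) + (Real.exp l - 1)) := by
        refine Finset.prod_le_prod (fun i _ => Finset.sum_nonneg fun a _ => (Real.exp_pos _).le)
          fun i _ => ?_
        calc ∑ a, Real.exp (l * g i a) ≤ ∑ a, (1 + g i a * (Real.exp l - 1)) :=
              Finset.sum_le_sum fun a _ => hconv _ (h0 i a) (hle i a)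
          _ = _ := by simp [Finset.sum_add_distrib, ← Finset.sum_mul, h1]
    _ = _ := by simp

theorem PMF.sum_toReal_eq_one {A : Type*} [Fintype A] (p : PMF A) : ∑ a, (p a).toReal = 1 := by
  rw [← ENNReal.toReal_sum (fun a _ => p.apply_ne_top a), ← tsum_fintype (L := .unconditional _),
    p.tsum_coe, ENNReal.toReal_one]

/-- If a message `w` about a uniformly random family `r : I → A` has likelihood ratios at most
`exp K`, then the mean number of entries `r i` that can be recovered from `w` is small. -/
theorem sum_recover_le {I A W : Type*} [Fintype I] [DecidableEq I] [Fintype A] [Nonempty A]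
    (P : (I → A) → PMF W) (μ : PMF W) (G : W → I → PMF A) {K l : ℝ} (hK : 0 ≤ K) (hl : 0 ≤ l)
    (hP : ∀ r w, P r w ≤ ENNReal.ofReal (Real.exp K) * μ w) :
    ENNReal.ofReal l * ∑ r : I → A, ∑ i, ((P r).bind fun w => G w i) (r i) ≤
      ENNReal.ofReal ((Fintype.card A : ℝ) ^ Fintype.card I *
        (K + Fintype.card I * Real.log (1 + (Real.exp l - 1) / Fintype.card A))) := by
  set M : ℝ := ((Fintype.card A : ℕ) : ℝ) with hM
  set N := Fintype.card I with hN
  have hM0 : 0 < M := by rw [hM]; exact_mod_cast Fintype.card_pos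
  have hel : 1 ≤ Real.exp l := Real.one_le_exp hl
  have hb1 : 1 ≤ 1 + (Real.exp l - 1) / M := by
    have : 0 ≤ (Real.exp l - 1) / M := div_nonneg (by linarith) hM0.le
    linarith
  set b := 1 + (Real.exp l - 1) / M with hb
  set a : ℝ := K + N * Real.log b with ha
  have ha0 : 0 ≤ a := by have := Real.log_nonneg hb1; positivity
  have hea : Real.exp (-a) * Real.exp K * (M + (Real.exp l - 1)) ^ N = M ^ N := by
    have h1 : M + (Real.exp l - 1) = M * b := by rw [hb]; field_simp
    have h2 : Real.exp a = Real.exp K * b ^ N := by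
      rw [ha, Real.exp_add, mul_comm (N : ℝ), Real.exp_mul, Real.exp_log (by linarith),
        Real.rpow_natCast]
    rw [h1, Real.exp_neg, h2, mul_pow]
    field_simp
  let Z : W → (I → A) → ℝ := fun w r => ∑ i, (G w i (r i)).toReal
  have hZ0 : ∀ w r, 0 ≤ Z w r := fun w r => Finset.sum_nonneg fun i _ => ENNReal.toReal_nonneg
  have hS : ∀ r, ∑ i, ((P r).bind fun w => G w i) (r i)
      = ∑' w, P r w * ENNReal.ofReal (Z w r) := by
    intro r
    simp only [PMF.bind_apply]
    rw [← Summable.tsum_finsetSum (fun _ _ => ENNReal.summable)]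
    refine tsum_congr fun w => ?_
    rw [← Finset.mul_sum, ENNReal.ofReal_sum_of_nonneg (fun i _ => ENNReal.toReal_nonneg)]
    simp [ENNReal.ofReal_toReal, PMF.apply_ne_top]
  have hcard : (Fintype.card (I → A) : ℝ) = M ^ N := by simp [hM, hN]
  have hone : ∀ (x : ℝ) r, ∑' w, P r w * ENNReal.ofReal x = ENNReal.ofReal x := by
    intro x r
    rw [ENNReal.tsum_mul_right, (P r).tsum_coe, one_mul]
  have hconst : ∀ x : ℝ, 0 ≤ x → ∑ _r : I → A, ENNReal.ofReal x = ENNReal.ofReal (M ^ N * x) := by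
    intro x hx
    rw [← ENNReal.ofReal_sum_of_nonneg (fun _ _ => hx), Finset.sum_const, nsmul_eq_mul,
      Finset.card_univ, hcard]
  have hpt : ∀ r w, P r w * ENNReal.ofReal l * ENNReal.ofReal (Z w r) + P r w * ENNReal.ofReal 1 ≤
      ENNReal.ofReal (Real.exp (-a) * Real.exp K) * (μ w * ENNReal.ofReal (Real.exp (l * Z w r)))
        + P r w * ENNReal.ofReal a := by
    intro r w
    calc _ = P r w * ENNReal.ofReal (l * Z w r + 1) := by
          rw [ENNReal.ofReal_add (mul_nonneg hl (hZ0 w r)) zero_le_one, ENNReal.ofReal_mul hl]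
          ring
      _ ≤ P r w * ENNReal.ofReal (Real.exp (-a) * Real.exp (l * Z w r) + a) := by
          refine mul_le_mul_right (ENNReal.ofReal_le_ofReal ?_) _
          rw [← Real.exp_add]
          linarith [Real.add_one_le_exp (-a + l * Z w r)]
      _ = P r w * ENNReal.ofReal (Real.exp (-a) * Real.exp (l * Z w r))
            + P r w * ENNReal.ofReal a := by
          rw [ENNReal.ofReal_add (by positivity) ha0, mul_add]
      _ ≤ (ENNReal.ofReal (Real.exp K) * μ w) * ENNReal.ofReal (Real.exp (-a) * Real.exp (l * Z w r))
            + P r w * ENNReal.ofReal a := by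
          gcongr
          exact hP r w
      _ = _ := by
          rw [ENNReal.ofReal_mul (by positivity), ENNReal.ofReal_mul (by positivity)]
          ring
  have hmain : ENNReal.ofReal l * ∑ r : I → A, ∑ i, ((P r).bind fun w => G w i) (r i)
      + ENNReal.ofReal (M ^ N) ≤ ENNReal.ofReal (M ^ N * a) + ENNReal.ofReal (M ^ N) := by
    calc _ = ∑ r : I → A, ∑' w,
            (P r w * ENNReal.ofReal l * ENNReal.ofReal (Z w r) + P r w * ENNReal.ofReal 1) := by
          simp only [hS, ENNReal.tsum_add, hone 1, Finset.sum_add_distrib]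
          rw [hconst 1 zero_le_one, mul_one, Finset.mul_sum]
          congr 1
          refine Finset.sum_congr rfl fun r _ => ?_
          rw [← ENNReal.tsum_mul_left]
          refine tsum_congr fun w => ?_
          ring
      _ ≤ ∑ r : I → A, ∑' w, (ENNReal.ofReal (Real.exp (-a) * Real.exp K) *
            (μ w * ENNReal.ofReal (Real.exp (l * Z w r))) + P r w * ENNReal.ofReal a) :=
          Finset.sum_le_sum fun r _ => ENNReal.tsum_le_tsum fun w => hpt r w
      _ = ENNReal.ofReal (Real.exp (-a) * Real.exp K) *
            ∑' w, μ w * ∑ r : I → A, ENNReal.ofReal (Real.exp (l * Z w r))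
            + ENNReal.ofReal (M ^ N * a) := by
          simp only [ENNReal.tsum_add, hone a, Finset.sum_add_distrib, ENNReal.tsum_mul_left]
          rw [hconst a ha0, ← Finset.mul_sum,
            ← Summable.tsum_finsetSum (fun _ _ => ENNReal.summable)]
          simp only [Finset.mul_sum]
      _ ≤ ENNReal.ofReal (Real.exp (-a) * Real.exp K) *
            ∑' w, μ w * ENNReal.ofReal ((M + (Real.exp l - 1)) ^ N)
            + ENNReal.ofReal (M ^ N * a) := by
          gcongr with w
          rw [← ENNReal.ofReal_sum_of_nonneg (fun _ _ => (Real.exp_pos _).le)]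
          exact ENNReal.ofReal_le_ofReal (sum_exp_sum_le (fun i x => (G w i x).toReal)
            (fun _ _ => ENNReal.toReal_nonneg) (fun i => (G w i).sum_toReal_eq_one) l)
      _ = _ := by
          rw [ENNReal.tsum_mul_right, μ.tsum_coe, one_mul, ← ENNReal.ofReal_mul (by positivity),
            hea, add_comm]
  exact ENNReal.le_of_add_le_add_right ENNReal.ofReal_ne_top hmain

/-! ### The data points of the parity task as functions of independent sources -/

/-- The randomness of a data point: the kind of point, the parity query and the share index. -/
abbrev ParSource (c m : ℕ) : Type := Bool × (Fin c → Bool) × Fin (m + 1)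

/-- The data point determined by its randomness and the instance. -/
def parPointOf {c d m : ℕ} (r : (Fin d → Bool) → Fin c → Bool)
    (sh : Fin (m + 1) → Fin d → Bool) (z : ParSource c m) : ParPoint c d m :=
  if z.1 then Sum.inl (z.2.1, fun j => Par (r j) z.2.1) else Sum.inr (z.2.2, sh z.2.2)

/-- The distribution of the randomness of a data point. -/
noncomputable def parSourceDist (c m : ℕ) : PMF (ParSource c m) :=
  (PMF.uniformOfFintype Bool).bind fun b =>
    (PMF.uniformOfFintype (Fin c → Bool)).bind fun x =>
      (PMF.uniformOfFintype (Fin (m + 1))).bind fun t => PMF.pure (b, x, t)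

theorem oneOutDist_eq_map (c d m : ℕ) (r : (Fin d → Bool) → Fin c → Bool)
    (sh : Fin (m + 1) → Fin d → Bool) :
    oneOutDist c d m r sh = (parSourceDist c m).map (parPointOf r sh) := by
  simp only [oneOutDist, parSourceDist, PMF.map, PMF.bind_bind, PMF.pure_bind, Function.comp_def,
    parPointOf]
  congr 1
  funext b
  cases b <;> simp [PMF.bind_const]

/-- Add `k` to the share with index `t`. -/
def shiftShare {d m : ℕ} (t : Fin (m + 1)) (k : Fin d → Bool) (sh : Fin (m + 1) → Fin d → Bool) :
    Fin (m + 1) → Fin d → Bool :=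
  Function.update sh t fun j => xor (sh t j) (k j)

theorem shiftShare_involutive {d m : ℕ} (t : Fin (m + 1)) (k : Fin d → Bool) :
    Function.Involutive (shiftShare t k) := by
  intro sh
  simp [shiftShare]

theorem xorFold_update_not {I : Type*} [Fintype I] [DecidableEq I] (f : I → Bool) (t : I) :
    xorFold (Function.update f t (!f t)) = !xorFold f := by
  have h : ∀ g : I → Bool, (Finset.univ.filter fun i => g i = true).card =
      (if g t = true then 1 else 0) + ∑ i ∈ Finset.univ.erase t, if g i = true then 1 else 0 := by
    intro g
    rw [Finset.card_filter]
    exact (Finset.add_sum_erase _ (fun i => if g i = true then 1 else 0) (Finset.mem_univ t)).symm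
  have h2 : (∑ i ∈ Finset.univ.erase t, if Function.update f t (!f t) i = true then 1 else 0) =
      ∑ i ∈ Finset.univ.erase t, if f i = true then 1 else 0 :=
    Finset.sum_congr rfl fun i hi => by rw [Function.update_of_ne (Finset.ne_of_mem_erase hi)]
  unfold xorFold
  rw [h, h, h2, Function.update_self]
  cases f t <;> simp <;> grind

theorem sOf_shiftShare {d m : ℕ} (t : Fin (m + 1)) (k : Fin d → Bool)
    (sh : Fin (m + 1) → Fin d → Bool) :
    sOf (shiftShare t k sh) = fun j => xor (sOf sh j) (k j) := by
  funext j
  have : (fun i => shiftShare t k sh i j) =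
      Function.update (fun i => sh i j) t (xor (sh t j) (k j)) := by
    funext i
    by_cases hi : i = t
    · subst hi; simp [shiftShare]
    · simp [shiftShare, hi]
  simp only [sOf, this]
  cases hk : k j
  · simp
  · simpa using xorFold_update_not (fun i => sh i j) t

/-- The points of the database `u` that hold shares miss some share. -/
theorem exists_unseen_share {c m : ℕ} (u : Fin m → ParSource c m) :
    ∃ t : Fin (m + 1), ∀ i, (u i).2.2 ≠ t := by
  by_contra! h
  have := Fintype.card_le_of_surjective (fun i => (u i).2.2) h
  simp at this

theorem sum_shiftShare {d m : ℕ} (t : Fin (m + 1)) (f : (Fin (m + 1) → Fin d → Bool) → ℝ≥0∞) :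
    (2 : ℝ≥0∞) ^ d * ∑ sh, f sh = ∑ sh, ∑ k, f (shiftShare t k sh) := by
  rw [Finset.sum_comm]
  have h : ∀ k : Fin d → Bool, ∑ sh, f (shiftShare t k sh) = ∑ sh, f sh := fun k =>
    Equiv.sum_comp (shiftShare_involutive t k).toPerm f
  simp [h]

/-- The success bound for a protocol with the randomness of the data points fixed. -/
theorem sum_protocol_le {c d m n : ℕ} {ε : ℝ} (hε : 0 ≤ ε) {Tr Q : Type} {Ai : Fin n → Type}
    {Cur : (Fin m → ParPoint c d m) → PMF Tr} (qmap : Tr → Fin n → Q)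
    {R : ∀ i : Fin n, Q → ParPoint c d m → PMF (Ai i)}
    (out : Tr → (∀ i, Ai i) → PMF (Fin c → Bool))
    (hCur : DPAlg ε Cur) (hR : ∀ i q, DPRand ε (R i q))
    (u : Fin m → ParSource c m) (v : Fin n → ParSource c m) {l : ℝ} (hl : 0 ≤ l) :
    2 ^ d * ENNReal.ofReal l *
      ∑ p : (Fin (m + 1) → Fin d → Bool) × ((Fin d → Bool) → Fin c → Bool),
        ((Cur fun i => parPointOf p.2 p.1 (u i)).bind fun tr =>
          (pmfPi n fun i => R i (qmap tr i) (parPointOf p.2 p.1 (v i))).bind fun ans =>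
            out tr ans) (p.2 (sOf p.1)) ≤
      Fintype.card (Fin (m + 1) → Fin d → Bool) *
        ENNReal.ofReal (((2 : ℝ) ^ c) ^ (2 ^ d) *
          ((m + n) * ε + 2 ^ d * Real.log (1 + (Real.exp l - 1) / 2 ^ c))) := by
  classical
  obtain ⟨t, ht⟩ := exists_unseen_share u
  rw [Fintype.sum_prod_type, mul_right_comm, sum_shiftShare t, Finset.sum_mul, ← nsmul_eq_mul,
    ← Finset.card_univ]
  refine Finset.sum_le_card_nsmul _ _ _ fun sh _ => ?_
  rw [Finset.sum_comm, mul_comm]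
  let e : (Fin d → Bool) → (Fin d → Bool) := fun k i => xor (sOf sh i) (k i)
  have he : Function.Involutive e := fun k => by simp [e]
  let parts : ((Fin d → Bool) → Fin c → Bool) → Fin n → ParPoint c d m :=
    fun r i => Sum.inl ((v i).2.1, fun j => Par (r j) (v i).2.1)
  let P : ((Fin d → Bool) → Fin c → Bool) → PMF (Tr × ∀ i, Ai i) := fun r =>
    (Cur fun i => parPointOf r sh (u i)).bind fun tr =>
      (pmfPi n fun i => R i (qmap tr i) (parts r i)).map (Prod.mk tr)
  let G : (Tr × ∀ i, Ai i) → (Fin d → Bool) → PMF (Fin c → Bool) := fun w j =>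
    (pmfPi n fun i => if (v i).1 then PMF.pure (w.2 i) else
      R i (qmap w.1 i) (Sum.inr ((v i).2.2, shiftShare t (e j) sh (v i).2.2))).bind fun ans =>
        out w.1 ans
  have hP : ∀ r w, P r w ≤ ENNReal.ofReal (Real.exp ((m + n) * ε)) * P (fun _ _ => false) w := by
    intro r w
    simp only [P, bind_map_prodMk_apply]
    have hexp : ENNReal.ofReal (Real.exp ((m + n) * ε)) =
        ENNReal.ofReal (Real.exp ε) ^ m * ENNReal.ofReal (Real.exp ε) ^ n := by
      rw [← pow_add, ← ENNReal.ofReal_pow (Real.exp_pos _).le, ← Real.exp_nat_mul]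
      push_cast
      rfl
    rw [hexp, mul_mul_mul_comm]
    exact mul_le_mul' (hCur.apply_le _ _ _)
      (pmfPi_apply_le n _ _ _ (fun i a => (hR i _).apply_le _ _ _) _)
  have hfac : ∀ r j, ((Cur fun i => parPointOf r (shiftShare t (e j) sh) (u i)).bind fun tr =>
      (pmfPi n fun i => R i (qmap tr i) (parPointOf r (shiftShare t (e j) sh) (v i))).bind
        fun ans => out tr ans) = (P r).bind fun w => G w j := by
    intro r j
    have hu : (fun i => parPointOf r (shiftShare t (e j) sh) (u i)) =
        fun i => parPointOf r sh (u i) := by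
      funext i
      simp [parPointOf, shiftShare, ht i]
    simp only [hu, P, G, PMF.map, PMF.bind_bind, PMF.pure_bind, Function.comp_def]
    congr 1
    funext tr
    rw [← PMF.bind_bind, ← pmfPi_bind n _ fun i a => if (v i).1 then PMF.pure a else
      R i (qmap tr i) (Sum.inr ((v i).2.2, shiftShare t (e j) sh (v i).2.2))]
    congr 2
    funext i
    cases hv : (v i).1 <;> simp [parPointOf, hv, parts, PMF.bind_const]
  have hmain := sum_recover_le P (P fun _ _ => false) G (K := (m + n) * ε) (by positivity) hl hP
  have hcardA : (Fintype.card (Fin c → Bool) : ℝ) = 2 ^ c := by simp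
  have hcardI : Fintype.card (Fin d → Bool) = 2 ^ d := by simp
  rw [hcardA, hcardI] at hmain
  push_cast at hmain
  refine le_trans (le_of_eq ?_) hmain
  congr 1
  refine Finset.sum_congr rfl fun r _ => ?_
  rw [← Equiv.sum_comp he.toPerm]
  refine Finset.sum_congr rfl fun j _ => ?_
  have hs : sOf (shiftShare t (e j) sh) = j := by
    rw [sOf_shiftShare]
    exact he j
  change ((Cur fun i => parPointOf r (shiftShare t (e j) sh) (u i)).bind fun tr =>
      (pmfPi n fun i => R i (qmap tr i) (parPointOf r (shiftShare t (e j) sh) (v i))).bind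
        fun ans => out tr ans) (r (sOf (shiftShare t (e j) sh))) = _
  rw [hfac, hs]

theorem log_two_sub_inv_le {c : ℕ} (hc : 1 ≤ c) :
    Real.log (1 + ((2 : ℝ) ^ c - 1) / 2 ^ c) ≤ 3 / 5 * c * Real.log 2 := by
  have hl2 : 0 < Real.log 2 := Real.log_pos one_lt_two
  obtain rfl | hc2 := hc.eq_or_lt
  · have h : Real.log ((3 / 2 : ℝ) ^ 5) ≤ Real.log (2 ^ 3) :=
      Real.log_le_log (by norm_num) (by norm_num)
    rw [Real.log_pow, Real.log_pow] at h
    norm_num at h ⊢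
    linarith
  · have hp : (0 : ℝ) < 2 ^ c := by positivity
    have h1 : ((2 : ℝ) ^ c - 1) / 2 ^ c ≤ 1 := by
      rw [div_le_one hp]; linarith
    have h0 : 0 ≤ ((2 : ℝ) ^ c - 1) / 2 ^ c :=
      div_nonneg (sub_nonneg.2 (one_le_pow₀ one_le_two)) hp.le
    have h2 : Real.log (1 + ((2 : ℝ) ^ c - 1) / 2 ^ c) ≤ Real.log 2 :=
      Real.log_le_log (by linarith) (by linarith)
    have h3 : (2 : ℝ) ≤ c := by exact_mod_cast hc2
    nlinarith

/-- there is a constant `C > 0` such that any `ε`-DP `(m,n)`-hybrid protocol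
(`m < n`) solving the 1-out-of-`2^d`-parity task with success probability `3/4` on every
instance, in the curator-first-then-one-local-round communication pattern, must have
`n ≥ C·c·2^d/(d·ε)`. -/
theorem stmt_9 : ∃ C : ℝ, 0 < C ∧
    ∀ (c d m n : ℕ), m < n → ∀ ε : ℝ, 0 < ε →
    ∀ (Tr Q Coin : Type) (Ai : Fin n → Type) (coinD : PMF Coin)
      (Cur : (Fin m → ParPoint c d m) → PMF Tr)
      (qmap : Coin → Tr → Fin n → Q)
      (R : ∀ i : Fin n, Q → ParPoint c d m → PMF (Ai i))
      (out : Coin → Tr → (∀ i, Ai i) → PMF (Fin c → Bool)),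
      DPAlg ε Cur →
      (∀ i q, DPRand ε (R i q)) →
      (∀ (r : (Fin d → Bool) → Fin c → Bool) (sh : Fin (m + 1) → Fin d → Bool),
        ENNReal.ofReal (3 / 4 : ℝ) ≤
          prOf ((iid (oneOutDist c d m r sh) m).bind fun xs =>
                 (iid (oneOutDist c d m r sh) n).bind fun ys =>
                 coinD.bind fun ρ =>
                 (Cur xs).bind fun tr =>
                 (pmfPi n (fun i => R i (qmap ρ tr i) (ys i))).bind fun ans =>
                 out ρ tr ans)
            {r (sOf sh)}) →
      C * (c : ℝ) * 2 ^ d / ((d : ℝ) * ε) ≤ (n : ℝ) := by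
  refine ⟨1 / 20, by norm_num, ?_⟩
  intro c d m n hmn ε hε Tr Q Coin Ai coinD Cur qmap R out hCur hR hsucc
  obtain rfl | hd := Nat.eq_zero_or_pos d
  · simp
  obtain rfl | hc := Nat.eq_zero_or_pos c
  · simp
  have hl2 : 2 / 3 < Real.log 2 := by linarith [Real.log_two_gt_d9]
  set l : ℝ := c * Real.log 2 with hl
  have hl0 : 0 ≤ l := by positivity
  have hexp : Real.exp l = 2 ^ c := by
    rw [hl, Real.exp_nat_mul, Real.exp_log two_pos]
  set B : ℝ := (m + n) * ε + 2 ^ d * Real.log (1 + (Real.exp l - 1) / 2 ^ c) with hB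
  set S := Fintype.card (Fin (m + 1) → Fin d → Bool) with hS
  have hupper : 2 ^ d * ENNReal.ofReal l *
      ∑ p : (Fin (m + 1) → Fin d → Bool) × ((Fin d → Bool) → Fin c → Bool),
        ((iid (oneOutDist c d m p.2 p.1) m).bind fun xs =>
          (iid (oneOutDist c d m p.2 p.1) n).bind fun ys =>
          coinD.bind fun ρ =>
          (Cur xs).bind fun tr =>
          (pmfPi n (fun i => R i (qmap ρ tr i) (ys i))).bind fun ans =>
          out ρ tr ans) (p.2 (sOf p.1)) ≤
      S * ENNReal.ofReal (((2 : ℝ) ^ c) ^ (2 ^ d) * B) := by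
    simp only [oneOutDist_eq_map, iid_map, PMF.bind_map, Function.comp_def]
    refine mul_sum_bind_apply_le _ _ _ _ _ _ fun u => ?_
    refine mul_sum_bind_apply_le _ _ _ _ _ _ fun v => ?_
    refine mul_sum_bind_apply_le _ _ _ _ _ _ fun ρ => ?_
    exact sum_protocol_le hε.le (qmap ρ) (out ρ) hCur hR u v hl0
  have hlower : ((S * (2 ^ c) ^ (2 ^ d) : ℕ) : ℝ≥0∞) * ENNReal.ofReal (3 / 4) ≤
      ∑ p : (Fin (m + 1) → Fin d → Bool) × ((Fin d → Bool) → Fin c → Bool),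
        ((iid (oneOutDist c d m p.2 p.1) m).bind fun xs =>
          (iid (oneOutDist c d m p.2 p.1) n).bind fun ys =>
          coinD.bind fun ρ =>
          (Cur xs).bind fun tr =>
          (pmfPi n (fun i => R i (qmap ρ tr i) (ys i))).bind fun ans =>
          out ρ tr ans) (p.2 (sOf p.1)) := by
    have hcard : S * (2 ^ c) ^ (2 ^ d) = (Finset.univ :
        Finset ((Fin (m + 1) → Fin d → Bool) × ((Fin d → Bool) → Fin c → Bool))).card := by
      rw [Finset.card_univ, Fintype.card_prod, hS]
      simp
    rw [hcard, ← nsmul_eq_mul]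
    refine Finset.card_nsmul_le_sum _ _ _ fun p _ => ?_
    simpa only [prOf, PMF.toOuterMeasure_apply_singleton] using hsucc p.2 p.1
  have hS0 : (0 : ℝ) < S := by rw [hS]; exact_mod_cast Fintype.card_pos
  have hB0 : 0 ≤ B := by
    have : 0 ≤ Real.log (1 + (Real.exp l - 1) / 2 ^ c) := by
      refine Real.log_nonneg (le_add_of_nonneg_right (div_nonneg ?_ (by positivity)))
      exact sub_nonneg.2 (Real.one_le_exp hl0)
    positivity
  have hreal : 2 ^ d * l * (S * (2 ^ c) ^ (2 ^ d) * (3 / 4)) ≤ S * ((2 ^ c) ^ (2 ^ d) * B) := by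
    have h := (mul_le_mul_right hlower (2 ^ d * ENNReal.ofReal l)).trans hupper
    have h' := ENNReal.toReal_mono (by finiteness) h
    have hBM : 0 ≤ ((2 : ℝ) ^ c) ^ (2 ^ d) * B := by positivity
    simpa [ENNReal.toReal_mul, ENNReal.toReal_ofReal hl0, ENNReal.toReal_ofReal hBM,
      ENNReal.toReal_ofReal (show (0 : ℝ) ≤ 3 / 4 by norm_num)] using h'
  have hcancel : 3 / 4 * (2 ^ d * l) ≤ B := by
    have hpos : (0 : ℝ) < S * (2 ^ c) ^ (2 ^ d) := by positivity
    refine le_of_mul_le_mul_left ?_ hpos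
    linarith
  have hlog := log_two_sub_inv_le hc
  have hD : (0 : ℝ) < 2 ^ d := by positivity
  have hc0 : (0 : ℝ) < c := by exact_mod_cast hc
  have hd1 : (1 : ℝ) ≤ d := by exact_mod_cast hd
  have hmn' : (m : ℝ) ≤ n := by exact_mod_cast hmn.le
  have hn : 1 / 20 * (c : ℝ) * 2 ^ d ≤ n * ε := by
    have h1 : 2 ^ d * Real.log (1 + (Real.exp l - 1) / 2 ^ c) ≤ 2 ^ d * (3 / 5 * l) := by
      rw [hexp, hl]
      gcongr
      linarith
    have h2 : 3 / 20 * (2 ^ d * l) ≤ (m + n) * ε := by linarith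
    have h3 : (m + n) * ε ≤ 2 * (n * ε) := by nlinarith
    have h4 : 2 ^ d * (c * (2 / 3)) ≤ 2 ^ d * l := by rw [hl]; gcongr
    linarith
  rw [div_le_iff₀ (by positivity)]
  have h5 : n * ε ≤ n * (d * ε) := by
    gcongr
    nlinarith
  linarith
end
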